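/- arXiv:1407.4208 — 2 statements merged into one kernel-verified Lean document; each statement's English description precedes it below -/
import Mathlib

section
/- Let γ = (γ_j)_{j≥1} be non-increasing nonnegative weights such that ∑_{j≥1} γ_j^τ < ∞ for some real τ > 0, and let δ > 0. Then there exists a constant C > 0 (depending only on γ and δ, independent of p and s) such that for every prime p and every s ∈ ℕ the Korobov point set P_{p,s} satisfies D*_γ(P_{p,s}) ≤ C·s·p^{−(1/2−δ)}. -/
open Finset

/-- Local discrepancy of the point set `x` at the corner point `t`:
`Δ(t) = #{n : x_n ∈ [0,t)}/N − ∏_j t_j`. -/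
noncomputable def localDisc {N s : ℕ} (x : Fin N → Fin s → ℝ) (t : Fin s → ℝ) : ℝ :=
  ((univ.filter fun n => ∀ j, x n j < t j).card : ℝ) / N - ∏ j, t j

/-- `(z_u, 1)`: the vector `z` with all components whose index is not in `u`
replaced by `1`. -/
def projPoint {s : ℕ} (u : Finset (Fin s)) (z : Fin s → ℝ) : Fin s → ℝ :=
  fun j => if j ∈ u then z j else 1

/-- The weight `γ_u = ∏_{j ∈ u} γ_j` of a set of coordinates `u ⊆ {1,…,s}`;
coordinate `j : Fin s` carries weight `γ (j+1)` (weights are indexed from `1`). -/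
noncomputable def weightOf {s : ℕ} (γ : ℕ → ℝ) (u : Finset (Fin s)) : ℝ :=
  ∏ j ∈ u, γ (j.1 + 1)

/-- Weighted star-discrepancy
`D*_γ(x) = sup_{z ∈ [0,1]^s} max_{∅ ≠ u ⊆ [s]} γ_u |Δ(z_u,1)|`. -/
noncomputable def wStarDisc {N s : ℕ} (γ : ℕ → ℝ) (x : Fin N → Fin s → ℝ) : ℝ :=
  sSup {d : ℝ | ∃ z : Fin s → ℝ, (∀ j, z j ∈ Set.Icc (0:ℝ) 1) ∧
    ∃ u : Finset (Fin s), u.Nonempty ∧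
      d = weightOf γ u * |localDisc x (projPoint u z)|}

/-- `N`-th minimal weighted star-discrepancy `disc_γ(N,s)`. -/
noncomputable def wMinDisc (γ : ℕ → ℝ) (N s : ℕ) : ℝ :=
  sInf {d : ℝ | ∃ x : Fin N → Fin s → ℝ,
    (∀ n j, x n j ∈ Set.Ico (0:ℝ) 1) ∧ d = wStarDisc γ x}

/-- Korobov's `p`-set `P_{p,s}`: the points `x_n = ({n/p}, {n²/p}, …, {n^s/p})`
for `n = 0, 1, …, p−1`. -/
noncomputable def korobovP (p s : ℕ) : Fin p → Fin s → ℝ :=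
  fun n j => Int.fract ((n.1 : ℝ) ^ (j.1 + 1) / p)

/-- Korobov's `p²`-set `Q_{p²,s}`: the points `x_n = ({n/p²}, {n²/p²}, …, {n^s/p²})`
for `n = 0, 1, …, p²−1`. -/
noncomputable def korobovQ (p s : ℕ) : Fin (p ^ 2) → Fin s → ℝ :=
  fun n j => Int.fract ((n.1 : ℝ) ^ (j.1 + 1) / ((p : ℝ) ^ 2))

/-- The Hua–Wang multi-set `R_{p²,s}`: the `p²` points
`x_{a,k} = ({k/p}, {ak/p}, …, {a^{s−1}k/p})` for `a, k = 0, …, p−1`, counted with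
multiplicity; here the index `n < p²` encodes `a = n / p` and `k = n % p`. -/
noncomputable def huaWangR (p s : ℕ) : Fin (p ^ 2) → Fin s → ℝ :=
  fun n j => Int.fract (((n.1 / p : ℕ) : ℝ) ^ j.1 * ((n.1 % p : ℕ) : ℝ) / p)

namespace KW
open Polynomial

/-- `T_k = ∑_{i<k} f^{p^i}`. -/
noncomputable def TT (p : ℕ) (f : (ZMod p)[X]) (k : ℕ) : (ZMod p)[X] :=
  ∑ i ∈ range k, f ^ (p ^ i)

lemma TT_natDegree (p : ℕ) [hp : Fact p.Prime] (f : (ZMod p)[X]) (hd : 1 ≤ f.natDegree) (k : ℕ) :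
    (TT p f (k+1)).natDegree = f.natDegree * p ^ k := by
  induction k with
  | zero => simp [TT]
  | succ k ih =>
    have h : TT p f (k+1+1) = TT p f (k+1) + f ^ (p ^ (k+1)) := by
      simp only [TT]; rw [sum_range_succ]
    rw [h, natDegree_add_eq_right_of_natDegree_lt, natDegree_pow, mul_comm]
    rw [ih, natDegree_pow, mul_comm]
    exact Nat.mul_lt_mul_of_pos_right (Nat.pow_lt_pow_right hp.out.one_lt (by omega)) hd

lemma aeval_pow_frob (p : ℕ) [hp : Fact p.Prime] {K : Type*} [Field K] [Algebra (ZMod p) K]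
    (u : (ZMod p)[X]) (x : K) (m : ℕ) : (aeval x u) ^ (p ^ m) = aeval (x ^ (p ^ m)) u := by
  induction m with
  | zero => simp
  | succ m ih =>
    rw [pow_succ, pow_mul, ih, pow_mul]
    have := ZMod.expand_card u
    rw [← map_pow, ← this, expand_aeval]

section
variable (p : ℕ) [hp : Fact p.Prime] (f : (ZMod p)[X]) 

/-- The auxiliary (Stepanov) polynomial. -/
noncomputable def GG (k A U : ℕ) (u : Fin A × Fin p → degreeLT (ZMod p) U) : (ZMod p)[X] :=
  ∑ ab : Fin A × Fin p, (u ab : (ZMod p)[X]) * (X ^ (ab.1.1 * p ^ k) * TT p f k ^ ab.2.1)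

lemma mem_deg {U : ℕ} (hU : 0 < U) (u : degreeLT (ZMod p) U) : (u : (ZMod p)[X]).natDegree < U := by
  have := mem_degreeLT.1 u.2
  by_cases h : (u : (ZMod p)[X]) = 0
  · simp [h, hU]
  · exact (natDegree_lt_iff_degree_lt h).2 this

lemma GG_ne_zero (hd : 1 ≤ f.natDegree) (hpd : ¬ p ∣ f.natDegree) (k A : ℕ)
    (u : Fin A × Fin p → degreeLT (ZMod p) (p ^ k)) (hu : u ≠ 0) : GG p f (k+1) A (p^k) u ≠ 0 := by
  have hTd := TT_natDegree p f hd k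
  have hT0 : TT p f (k+1) ≠ 0 := by
    intro h; rw [h] at hTd; simp at hTd
    rcases hTd with h | h
    · omega
    · exact absurd h.1 hp.out.ne_zero
  have hpk : 0 < p ^ k := pow_pos hp.out.pos _
  set t : Fin A × Fin p → (ZMod p)[X] := fun ab =>
    (u ab : (ZMod p)[X]) * (X ^ (ab.1.1 * p ^ (k+1)) * TT p f (k+1) ^ ab.2.1) with ht
  have hdeg : ∀ ab, t ab ≠ 0 → (t ab).natDegree / p ^ k = p * ab.1.1 + ab.2.1 * f.natDegree := by
    intro ab h0
    have hu0 : (u ab : (ZMod p)[X]) ≠ 0 := left_ne_zero_of_mul h0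
    have h1 := mem_deg p hpk (u ab)
    rw [ht]
    simp only
    rw [natDegree_mul hu0 (right_ne_zero_of_mul h0), natDegree_mul (by simp) (pow_ne_zero _ hT0),
      natDegree_pow, natDegree_pow, natDegree_X, hTd]
    have : (u ab : (ZMod p)[X]).natDegree + (ab.1.1 * p ^ (k+1) * 1 + ab.2.1 * (f.natDegree * p ^ k))
      = (u ab : (ZMod p)[X]).natDegree + (p * ab.1.1 + ab.2.1 * f.natDegree) * p ^ k := by ring
    rw [this, Nat.add_mul_div_right _ _ hpk, Nat.div_eq_of_lt h1, zero_add]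
  have hsum := degree_sum_eq_of_disjoint t univ (by
    intro a ha b hb hab heq
    apply hab
    have hnd : (t a).natDegree = (t b).natDegree := natDegree_eq_of_degree_eq heq
    have e1 := hdeg a ha.2
    rw [hnd, hdeg b hb.2] at e1
    have hb2 : a.2.1 = b.2.1 := by
      have hm : b.2.1 * f.natDegree ≡ a.2.1 * f.natDegree [MOD p] := by
        have := congrArg (· % p) e1
        simpa [Nat.ModEq, Nat.mul_add_mod] using this
      have hc : Nat.gcd p f.natDegree = 1 := (Nat.Prime.coprime_iff_not_dvd hp.out).2 hpd
      have := Nat.ModEq.cancel_right_of_coprime hc hm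
      have := Nat.ModEq.eq_of_lt_of_lt this b.2.2 a.2.2
      exact this.symm
    rw [hb2] at e1
    have : p * b.1.1 = p * a.1.1 := by omega
    have := Nat.eq_of_mul_eq_mul_left hp.out.pos this
    exact Prod.ext (Fin.ext this.symm) (Fin.ext hb2))
  obtain ⟨ab, hab⟩ := Function.ne_iff.1 hu
  have hab' : (u ab : (ZMod p)[X]) ≠ 0 := by
    intro h; apply hab; exact Subtype.ext h
  have htab : t ab ≠ 0 := mul_ne_zero hab' (mul_ne_zero (by simp) (pow_ne_zero _ hT0))
  intro hG
  have hG' : ∑ x, t x = 0 := hG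
  rw [hG', degree_zero] at hsum
  have := Finset.le_sup (f := fun i => (t i).degree) (mem_univ ab)
  rw [← hsum, le_bot_iff] at this
  exact htab (degree_eq_bot.1 this)

lemma GG_natDegree (hd : 1 ≤ f.natDegree) (k A : ℕ)
    (u : Fin A × Fin p → degreeLT (ZMod p) (p ^ k)) :
    (GG p f (k+1) A (p^k) u).natDegree ≤ p ^ k + A * p ^ (k+1) + f.natDegree * p ^ (k+1) := by
  have hpk : 0 < p ^ k := pow_pos hp.out.pos _
  apply natDegree_sum_le_of_forall_le
  intro ab _
  refine natDegree_mul_le.trans ?_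
  have h1 := mem_deg p hpk (u ab)
  have h2 : (X ^ (ab.1.1 * p ^ (k+1)) * TT p f (k+1) ^ ab.2.1).natDegree ≤
      ab.1.1 * p ^ (k+1) + ab.2.1 * (f.natDegree * p ^ k) := by
    refine natDegree_mul_le.trans ?_
    rw [natDegree_X_pow]
    gcongr
    refine natDegree_pow_le.trans ?_
    rw [TT_natDegree p f hd]
  have h3 : ab.1.1 * p ^ (k+1) ≤ A * p ^ (k+1) := Nat.mul_le_mul_right _ ab.1.2.le
  have h4 : ab.2.1 * (f.natDegree * p ^ k) ≤ f.natDegree * p ^ (k+1) := by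
    calc _ ≤ p * (f.natDegree * p ^ k) := Nat.mul_le_mul_right _ ab.2.2.le
      _ = _ := by ring
  omega

/-- The linear map whose kernel gives good coefficients. -/
noncomputable def HH (α : ZMod p) (μ A U : ℕ) :
    (Fin A × Fin p → degreeLT (ZMod p) U) →ₗ[ZMod p] (ZMod p)[X] :=
  ∑ ab : Fin A × Fin p, (LinearMap.mulRight (ZMod p)
    (X ^ (ab.1.1) * (C α - TT p f μ) ^ ab.2.1)) ∘ₗ (expand (ZMod p) (p ^ μ)).toLinearMap ∘ₗ
      (degreeLT (ZMod p) U).subtype ∘ₗ LinearMap.proj ab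

lemma HH_apply (α : ZMod p) (μ A U : ℕ) (u : Fin A × Fin p → degreeLT (ZMod p) U) :
    HH p f α μ A U u = ∑ ab : Fin A × Fin p, expand (ZMod p) (p^μ) (u ab) *
      (X ^ (ab.1.1) * (C α - TT p f μ) ^ ab.2.1) := by
  simp [HH, mul_assoc]

lemma HH_mem (hd : 1 ≤ f.natDegree) (α : ZMod p) (μ A k : ℕ)
    (u : Fin A × Fin p → degreeLT (ZMod p) (p ^ k)) :
    HH p f α (μ+1) A (p^k) u ∈ degreeLT (ZMod p)
      (p ^ (μ + 1) * p ^ k + A + f.natDegree * p ^ (μ+1)) := by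
  have hpk : 0 < p ^ k := pow_pos hp.out.pos _
  have hpm : 0 < p ^ (μ+1) := pow_pos hp.out.pos _
  rw [HH_apply]
  refine Submodule.sum_mem _ fun ab _ => ?_
  rw [mem_degreeLT]
  refine (degree_le_natDegree).trans_lt ?_
  rw [Nat.cast_lt]
  refine natDegree_mul_le.trans_lt ?_
  have h1 := mem_deg p hpk (u ab)
  have h2 : (X ^ (ab.1.1) * (C α - TT p f (μ+1)) ^ ab.2.1).natDegree ≤
      ab.1.1 + ab.2.1 * (f.natDegree * p ^ μ) := by
    refine natDegree_mul_le.trans ?_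
    rw [natDegree_X_pow]
    gcongr
    refine natDegree_pow_le.trans ?_
    gcongr
    refine (natDegree_sub_le _ _).trans ?_
    rw [TT_natDegree p f hd]; simp
  have h3 := ab.1.2
  have h4 : ab.2.1 * (f.natDegree * p ^ μ) ≤ f.natDegree * p ^ (μ+1) := by
    calc _ ≤ p * (f.natDegree * p ^ μ) := Nat.mul_le_mul_right _ ab.2.2.le
      _ = _ := by ring
  rw [natDegree_expand]
  have h5 : (u ab : (ZMod p)[X]).natDegree * p ^ (μ+1) ≤ p ^ (μ+1) * p ^ k := by
    rw [mul_comm]; exact Nat.mul_le_mul_left _ h1.le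
  omega

/-- Stepanov's bound. -/
lemma stepanov (hd : 1 ≤ f.natDegree) (hpd : ¬ p ∣ f.natDegree) (ν μ k : ℕ) (hν : ν = (μ+1) + (k+1))
    (hμk : μ ≤ k) {K : Type*} [Field K] [Fintype K] [DecidableEq K] [Algebra (ZMod p) K]
    (hK : Fintype.card K = p ^ ν)
    (α : ZMod p) :
    (univ.filter fun x : K => ∑ i ∈ range ν, (aeval x f) ^ (p ^ i) = algebraMap (ZMod p) K α).card
      ≤ p ^ (ν - 1) + (3 * f.natDegree + 3) * p ^ (k+1) := by
  set d := f.natDegree with hdd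
  set A := p ^ μ + (2 * d + 2) with hA
  have hp2 := hp.out.two_le
  have hpm : 0 < p ^ μ := pow_pos hp.out.pos _
  have hlt : p ^ (μ + 1) * p ^ k + A + d * p ^ (μ+1) < A * p * p ^ k := by
    have e1 : A * p * p ^ k = p ^ (μ+1) * p ^ k + (2*d+2) * p ^ (k+1) := by rw [hA]; ring
    rw [e1]
    have e2 : p ^ (μ+1) ≤ p ^ (k+1) := Nat.pow_le_pow_right hp.out.pos (by omega)
    have e3 : 2 * p ^ μ ≤ p ^ (μ+1) := by rw [pow_succ, mul_comm]; gcongr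
    have e4 : (2*d+2) * p ^ (μ+1) ≤ (2*d+2) * p ^ (k+1) := by gcongr
    have e5 : p ^ μ + (2 * d + 2) + d * p ^ (μ+1) < (2*d+2) * p ^ (μ+1) := by nlinarith
    omega
  let L : (Fin A × Fin p → degreeLT (ZMod p) (p^k)) →ₗ[ZMod p]
      degreeLT (ZMod p) (p ^ (μ + 1) * p ^ k + A + d * p ^ (μ+1)) :=
    (HH p f α (μ+1) A (p^k)).codRestrict _ (HH_mem p f hd α μ A k)
  have hfin : ∀ n, Module.finrank (ZMod p) (degreeLT (ZMod p) n) = n := fun n => by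
    rw [LinearEquiv.finrank_eq (degreeLTEquiv (ZMod p) n)]; simp
  have : ∀ n, FiniteDimensional (ZMod p) (degreeLT (ZMod p) n) := fun n =>
    (degreeLTEquiv (ZMod p) n).symm.finiteDimensional
  have hker : LinearMap.ker L ≠ ⊥ := by
    apply LinearMap.ker_ne_bot_of_finrank_lt
    rw [hfin, Module.finrank_pi_fintype]
    simp [hfin]
    linarith
  obtain ⟨u, hu, hu0⟩ := Submodule.exists_mem_ne_zero_of_ne_bot hker
  have hH : HH p f α (μ+1) A (p^k) u = 0 := by
    have := congrArg Subtype.val (LinearMap.mem_ker.1 hu)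
    exact this
  have hG := GG_ne_zero p f hd hpd k A u hu0
  set G := GG p f (k+1) A (p^k) u with hGdef
  have hroots : ∀ x : K, ∑ i ∈ range ν, (aeval x f) ^ (p ^ i) = algebraMap (ZMod p) K α →
      aeval x G = 0 := by
    intro x hx
    have : CharP K p := charP_of_injective_algebraMap (algebraMap (ZMod p) K).injective p
    have hT : aeval x (TT p f (k+1)) ^ (p ^ (μ+1)) = algebraMap (ZMod p) K α - aeval x (TT p f (μ+1)) := by
      rw [← hx, hν, sum_range_add]
      simp only [TT, map_sum, map_pow]
      rw [sum_pow_char_pow]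
      rw [add_sub_cancel_left]
      refine sum_congr rfl fun i _ => ?_
      rw [← pow_mul, ← pow_add, add_comm]
    have hxq : x ^ (p ^ ν) = x := by rw [← hK]; exact FiniteField.pow_card x
    have : aeval x G ^ (p ^ (μ+1)) = aeval x (HH p f α (μ+1) A (p^k) u) := by
      rw [HH_apply, hGdef, GG, map_sum, map_sum, sum_pow_char_pow]
      refine sum_congr rfl fun ab _ => ?_
      rw [map_mul, map_mul, mul_pow, mul_pow, aeval_pow_frob, map_mul, expand_aeval, map_mul]
      congr 1
      rw [map_pow, map_pow, map_pow, map_pow, aeval_X, map_sub, aeval_C, ← hT]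
      congr 1
      · rw [← pow_mul, mul_assoc, ← pow_add, mul_comm, pow_mul, add_comm, ← hν, hxq]
      · rw [← pow_mul, ← pow_mul, mul_comm]
    rw [hH, map_zero] at this
    exact pow_eq_zero_iff (pow_ne_zero _ hp.out.ne_zero) |>.1 this
  have hsub : (univ.filter fun x : K => ∑ i ∈ range ν, (aeval x f) ^ (p ^ i) = algebraMap (ZMod p) K α)
      ⊆ (G.aroots K).toFinset := by
    intro x hx
    rw [Multiset.mem_toFinset, mem_aroots]
    exact ⟨hG, hroots x (mem_filter.1 hx).2⟩
  calc _ ≤ _ := card_le_card hsub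
    _ ≤ _ := Multiset.toFinset_card_le _
    _ ≤ (G.map (algebraMap (ZMod p) K)).natDegree := card_roots' _
    _ ≤ G.natDegree := natDegree_map_le
    _ ≤ _ := GG_natDegree p f hd k A u
    _ ≤ _ := by
      have : ν - 1 = μ + (k+1) := by omega
      rw [this, pow_add p μ (k+1), hA]
      have e3 : p ^ k ≤ p ^ (k+1) := Nat.pow_le_pow_right hp.out.pos (by omega)
      rw [← hdd]
      nlinarith
end
end KW

namespace KW
open Polynomial

section
variable (p : ℕ) [hp : Fact p.Prime] (f : (ZMod p)[X]) 

lemma norm_addChar (ψ : AddChar (ZMod p) ℂ) (a : ZMod p) : ‖ψ a‖ = 1 := by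
  have : NeZero p := ⟨hp.out.ne_zero⟩
  exact AddChar.norm_apply ψ a

/-- Bound for the character sums over extension fields. -/
lemma charSum_bound (hd : 1 ≤ f.natDegree) (hpd : ¬ p ∣ f.natDegree) (ψ : AddChar (ZMod p) ℂ)
    (hψ : ψ ≠ 1) (ν : ℕ) (hν2 : 2 ≤ ν) {K : Type*} [Field K] [Fintype K] [Algebra (ZMod p) K]
    (hK : Fintype.card K = p ^ ν) :
    ‖∑ x : K, ψ (Algebra.trace (ZMod p) K (aeval x f))‖ ≤
      (2 * p ^ 2 * (3 * f.natDegree + 3)) * (Real.sqrt p) ^ ν := by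
  classical
  have : NeZero p := ⟨hp.out.ne_zero⟩
  obtain ⟨μ, hμ⟩ : ∃ μ, ν / 2 = μ + 1 := ⟨ν / 2 - 1, by omega⟩
  obtain ⟨k, hk⟩ : ∃ k, ν - ν / 2 = k + 1 := ⟨ν - ν / 2 - 1, by omega⟩
  have hfr : Module.finrank (ZMod p) K = ν := by
    have := Module.card_eq_pow_finrank (K := ZMod p) (V := K)
    rw [hK, ZMod.card] at this
    exact (Nat.pow_right_injective hp.out.two_le this).symm
  set N : ZMod p → ℕ := fun α => (univ.filter fun x : K => Algebra.trace (ZMod p) K (aeval x f) = α).card with hN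
  have hNle : ∀ α, N α ≤ p ^ (ν - 1) + (3 * f.natDegree + 3) * p ^ (k+1) := by
    intro α
    have := stepanov p f hd hpd ν μ k (by omega) (by omega) hK α
    refine le_trans (le_of_eq ?_) this
    rw [hN]
    simp only
    congr 1
    ext x
    simp only [mem_filter, mem_univ, true_and]
    have h1 := FiniteField.algebraMap_trace_eq_sum_pow (ZMod p) K (aeval x f)
    rw [hfr, Nat.card_eq_fintype_card, ZMod.card] at h1
    rw [← h1]
    exact (algebraMap (ZMod p) K).injective.eq_iff.symm
  have hNsum : ∑ α, N α = p ^ ν := by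
    rw [← hK]
    exact (card_eq_sum_card_fiberwise (s := univ) (t := univ)
      (f := fun x : K => Algebra.trace (ZMod p) K (aeval x f)) (by intro; simp)).symm
  have hS : ∑ x : K, ψ (Algebra.trace (ZMod p) K (aeval x f)) =
      ∑ α, ((N α : ℝ) - p ^ (ν - 1) : ℝ) * ψ α := by
    have h1 : ∑ α, ((N α : ℝ) - p ^ (ν - 1) : ℝ) * ψ α = ∑ α, (N α : ℂ) * ψ α := by
      have h0 : ∑ α, ψ α = 0 := AddChar.sum_eq_zero_of_ne_one hψ
      have : ∀ α, ((((N α : ℝ) - p ^ (ν - 1) : ℝ)) : ℂ) * ψ α = (N α : ℂ) * ψ α - (p:ℂ)^(ν-1) * ψ α := by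
        intro α; push_cast; ring
      simp_rw [this]
      rw [sum_sub_distrib, ← mul_sum, h0]; simp
    rw [h1, ← sum_fiberwise_of_maps_to (s := univ) (t := univ) (g := fun x : K => Algebra.trace (ZMod p) K (aeval x f)) (by simp)]
    refine sum_congr rfl fun α _ => ?_
    rw [hN, ← nsmul_eq_mul, ← sum_const]
    refine sum_congr rfl fun x hx => ?_
    rw [(mem_filter.1 hx).2]
  set B : ℝ := (3 * f.natDegree + 3) * p ^ (k+1) with hB
  have hB0 : 0 ≤ B := by positivity
  have habs : ∀ α, |((N α : ℝ) - p ^ (ν - 1) : ℝ)| ≤ 2 * B - ((N α : ℝ) - p ^ (ν - 1)) := by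
    intro α
    have : (N α : ℝ) ≤ p ^ (ν - 1) + B := by rw [hB]; exact_mod_cast hNle α
    rw [abs_le]; constructor <;> linarith
  have hpn : (p:ℝ) ^ ν = p * p ^ (ν - 1) := by rw [← pow_succ']; congr 1; omega
  calc _ ≤ ∑ α, ‖(((N α : ℝ) - p ^ (ν - 1) : ℝ) : ℂ) * ψ α‖ := by rw [hS]; exact norm_sum_le _ _
    _ = ∑ α, |((N α : ℝ) - p ^ (ν - 1) : ℝ)| := by
      refine sum_congr rfl fun α _ => ?_
      rw [norm_mul, norm_addChar, mul_one, Complex.norm_real, Real.norm_eq_abs]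
    _ ≤ ∑ α, (2 * B - ((N α : ℝ) - p ^ (ν - 1))) := sum_le_sum fun α _ => habs α
    _ = 2 * B * p := by
      have h2 : ∑ α, (N α : ℝ) = p ^ ν := by exact_mod_cast hNsum
      rw [sum_sub_distrib, sum_sub_distrib, h2]
      simp [ZMod.card]
      rw [hpn]; ring
    _ ≤ _ := by
      have hs : (p:ℝ) ^ (k+1) ≤ p * Real.sqrt p ^ ν := by
        have hp1 : (1:ℝ) ≤ p := by exact_mod_cast hp.out.one_le
        have h1 : 1 ≤ Real.sqrt p := Real.one_le_sqrt.2 hp1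
        have h2 : Real.sqrt p ^ 2 = p := Real.sq_sqrt (by positivity)
        calc (p:ℝ) ^ (k+1) = Real.sqrt p ^ (2 * (k+1)) := by rw [pow_mul, h2]
          _ ≤ Real.sqrt p ^ (2 + ν) := pow_le_pow_right₀ h1 (by omega)
          _ = _ := by rw [pow_add, h2]
      rw [hB]
      calc _ = 2 * p * (3 * f.natDegree + 3) * (p:ℝ) ^ (k+1) := by ring
        _ ≤ 2 * p * (3 * f.natDegree + 3) * (p * Real.sqrt p ^ ν) := by gcongr
        _ = _ := by ring

abbrev KK := AlgebraicClosure (ZMod p)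

lemma exists_proj : ∃ π : KK p →ₗ[ZMod p] ZMod p, ∀ a, π (algebraMap (ZMod p) (KK p) a) = a := by
  obtain ⟨g, hg⟩ := LinearMap.exists_leftInverse_of_injective
    (Algebra.linearMap (ZMod p) (KK p)) (LinearMap.ker_eq_bot.2 (algebraMap (ZMod p) (KK p)).injective)
  exact ⟨g, fun a => by simpa using LinearMap.congr_fun hg a⟩

noncomputable def ppi : KK p →ₗ[ZMod p] ZMod p := (exists_proj p).choose

lemma ppi_alg (a : ZMod p) : ppi p (algebraMap (ZMod p) (KK p) a) = a := (exists_proj p).choose_spec a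

/-- sum of `f` over the roots of `g`. -/
noncomputable def rs (g : (ZMod p)[X]) : KK p := ((g.aroots (KK p)).map (fun a => aeval a f)).sum

/-- the multiplicative character on monic polynomials. -/
noncomputable def ch (ψ : AddChar (ZMod p) ℂ) (g : (ZMod p)[X]) : ℂ := ψ (ppi p (rs p f g))

lemma ch_mul (ψ : AddChar (ZMod p) ℂ) (g h : (ZMod p)[X]) (hg : g ≠ 0) (hh : h ≠ 0) :
    ch p f ψ (g * h) = ch p f ψ g * ch p f ψ h := by
  unfold ch rs
  rw [aroots_mul (mul_ne_zero hg hh), Multiset.map_add, Multiset.sum_add, map_add, AddChar.map_add_eq_mul]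

lemma ch_one (ψ : AddChar (ZMod p) ℂ) : ch p f ψ 1 = 1 := by
  simp [ch, rs]

lemma ch_pow (ψ : AddChar (ZMod p) ℂ) (g : (ZMod p)[X]) (hg : g ≠ 0) (m : ℕ) :
    ch p f ψ (g ^ m) = ch p f ψ g ^ m := by
  induction m with
  | zero => simp [ch_one]
  | succ m ih => rw [pow_succ, ch_mul _ _ _ _ _ (pow_ne_zero _ hg) hg, ih, pow_succ]

lemma trace_eq_rs {L : Type*} [Field L] [Finite L] [Algebra (ZMod p) L] (x : L) :
    algebraMap (ZMod p) (KK p) (Algebra.trace (ZMod p) L (aeval x f)) =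
      (Module.finrank (ZMod p) L / (minpoly (ZMod p) x).natDegree) • rs p f (minpoly (ZMod p) x) := by
  classical
  have hx : IsIntegral (ZMod p) x := Algebra.IsIntegral.isIntegral x
  let E := IntermediateField.adjoin (ZMod p) {x}
  let pb : PowerBasis (ZMod p) E := IntermediateField.adjoin.powerBasis hx
  have hgen : algebraMap E L pb.gen = x := by simp [pb, E]
  have hmin : minpoly (ZMod p) pb.gen = minpoly (ZMod p) x := by
    rw [← hgen]; exact (minpoly.algebraMap_eq (algebraMap E L).injective _).symm
  have h1 : aeval x f = algebraMap E L (aeval pb.gen f) := by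
    rw [← hgen, aeval_algebraMap_apply]
  have hdim : Module.finrank (ZMod p) L / (minpoly (ZMod p) x).natDegree = Module.finrank E L := by
    rw [← IntermediateField.adjoin.finrank hx, ← Module.finrank_mul_finrank (ZMod p) E L]
    exact Nat.mul_div_cancel_left _ Module.finrank_pos
  rw [h1, ← Algebra.trace_trace (S := E), Algebra.trace_algebraMap, map_nsmul, map_nsmul, hdim]
  congr 1
  have h2 := trace_eq_sum_embeddings (K := ZMod p) (L := E) (E := KK p) (x := aeval pb.gen f)
  rw [h2]
  unfold rs
  have hsep : (minpoly (ZMod p) x).Separable := Algebra.IsSeparable.isSeparable (ZMod p) x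
  have hnd : ((minpoly (ZMod p) x).aroots (KK p)).Nodup := nodup_roots hsep.map
  have e : ∑ σ : E →ₐ[ZMod p] KK p, σ (aeval pb.gen f) = ∑ σ : E →ₐ[ZMod p] KK p, aeval (σ pb.gen) f := by
    refine sum_congr rfl fun σ _ => ?_
    rw [aeval_algHom_apply]
  have e' : ∑ a ∈ ((minpoly (ZMod p) x).aroots (KK p)).toFinset, aeval a f =
     (((minpoly (ZMod p) x).aroots (KK p)).map (fun a => aeval a f)).sum := by
    rw [Finset.sum_eq_multiset_sum, Multiset.toFinset_val, Multiset.dedup_eq_self.mpr hnd]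
  rw [← e']
  have e2 : ∑ σ : E →ₐ[ZMod p] KK p, aeval (σ pb.gen) f =
      ∑ a : {y : KK p // y ∈ (minpoly (ZMod p) pb.gen).aroots (KK p)}, aeval a.1 f := by
    refine Fintype.sum_equiv pb.liftEquiv' _ _ fun σ => ?_
    rw [PowerBasis.liftEquiv'_apply_coe]
  rw [show (∑ σ : E →ₐ[ZMod p] KK p, σ (aeval pb.gen f)) = _ from e.trans e2]
  rw [hmin]
  symm
  refine Finset.sum_subtype _ (fun a => ?_) _
  simp
end
end KW

namespace KW
open Polynomial

section
variable (p : ℕ) [hp : Fact p.Prime] (f : (ZMod p)[X]) (ψ : AddChar (ZMod p) ℂ)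

open Classical in
/-- monic polynomials of degree `k`. -/
noncomputable def Mon (k : ℕ) : Finset (ZMod p)[X] :=
  (univ : Finset (Fin k → ZMod p)).image (fun c => X ^ k + ∑ i : Fin k, C (c i) * X ^ (i : ℕ))

lemma mem_Mon (k : ℕ) (g : (ZMod p)[X]) : g ∈ Mon p k ↔ g.Monic ∧ g.natDegree = k := by
  classical
  simp only [Mon, mem_image, mem_univ, true_and]
  constructor
  · rintro ⟨c, rfl⟩
    have hlt := degree_sum_fin_lt c
    exact ⟨monic_X_pow_add hlt, natDegree_eq_of_degree_eq_some (by
      rw [degree_add_eq_left_of_degree_lt (by rwa [degree_X_pow]), degree_X_pow])⟩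
  · rintro ⟨hm, rfl⟩
    refine ⟨fun i => g.coeff i, ?_⟩
    conv_rhs => rw [hm.as_sum]
    rw [Finset.sum_range]

open Classical in
noncomputable def Irr (e : ℕ) : Finset (ZMod p)[X] := (Mon p e).filter Irreducible

lemma mem_Irr (k : ℕ) (g : (ZMod p)[X]) : g ∈ Irr p k ↔ (g.Monic ∧ g.natDegree = k) ∧ Irreducible g := by
  classical
  simp only [Irr, mem_filter, mem_Mon]

noncomputable def AA (k : ℕ) : ℂ := ∑ g ∈ Mon p k, ch p f ψ g

noncomputable def Lam (j : ℕ) : ℂ :=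
  ∑ e ∈ j.divisors, ∑ P ∈ Irr p e, (e : ℂ) * ch p f ψ P ^ (j / e)

lemma irr_disj (s : Set ℕ) : s.PairwiseDisjoint (Irr p) := by
  intro a _ b _ hab
  rw [Function.onFun, Finset.disjoint_left]
  intro P h1 h2
  rw [mem_Irr] at h1 h2
  exact hab (h1.1.2.symm.trans h2.1.2)

lemma charSum_eq_Lam (ν : ℕ) (hν : 1 ≤ ν) {L : Type*} [Field L] [Fintype L] [Algebra (ZMod p) L]
    (hL : Fintype.card L = p ^ ν) :
    ∑ x : L, ψ (Algebra.trace (ZMod p) L (aeval x f)) = Lam p f ψ ν := by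
  classical
  have hfr : Module.finrank (ZMod p) L = ν := by
    have := Module.card_eq_pow_finrank (K := ZMod p) (V := L)
    rw [hL, ZMod.card] at this
    exact (Nat.pow_right_injective hp.out.two_le this).symm
  have hIntegral : ∀ x : L, IsIntegral (ZMod p) x := fun x => Algebra.IsIntegral.isIntegral x
  rw [← sum_fiberwise_of_maps_to (s := univ) (t := ν.divisors.biUnion (Irr p))
    (g := fun x : L => minpoly (ZMod p) x)]
  · rw [sum_biUnion (irr_disj p _)]
    refine sum_congr rfl fun e he => sum_congr rfl fun P hP => ?_
    obtain ⟨⟨hPm, hPe⟩, hPi⟩ := (mem_Irr p _ _).1 hP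
    have hev : e ∣ ν := Nat.dvd_of_mem_divisors he
    have hcard : (univ.filter fun x : L => minpoly (ZMod p) x = P).card = e := by
      have hdv : P ∣ X ^ (p ^ ν) - X := by
        have := (hPi.natDegree_dvd_iff_dvd_X_pow_card_pow_sub_X (n := ν)).1 (hPe ▸ hev)
        rwa [Nat.card_eq_fintype_card, ZMod.card] at this
      have hsp : (P.map (algebraMap (ZMod p) L)).Splits := by
        have h1 := FiniteField.splits_X_pow_card_sub_X p (K := L)
        rw [hL] at h1
        refine Splits.of_dvd h1 ?_ (map_dvd (algebraMap _ L) hdv)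
        refine (Polynomial.map_ne_zero_iff (algebraMap (ZMod p) L).injective).2 ?_
        exact FiniteField.X_pow_card_pow_sub_X_ne_zero _ (by omega) hp.out.one_lt
      have hnd : (P.aroots L).Nodup := nodup_roots
        (Separable.map (PerfectField.separable_of_irreducible hPi))
      have : (univ.filter fun x : L => minpoly (ZMod p) x = P) = (P.aroots L).toFinset := by
        ext x
        simp only [mem_filter, mem_univ, true_and, Multiset.mem_toFinset, mem_aroots]
        constructor
        · intro h
          exact ⟨hPm.ne_zero, by rw [← h]; exact minpoly.aeval _ _⟩
        · rintro ⟨_, h⟩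
          exact (minpoly.eq_of_irreducible_of_monic hPi h hPm).symm
      rw [this, Multiset.toFinset_card_of_nodup hnd]
      rw [← hPe, ← natDegree_map (algebraMap (ZMod p) L), hsp.natDegree_eq_card_roots]
    have : ∀ x ∈ (univ.filter fun x : L => minpoly (ZMod p) x = P),
        ψ (Algebra.trace (ZMod p) L (aeval x f)) = ch p f ψ P ^ (ν / e) := by
      intro x hx
      have hx := (mem_filter.1 hx).2
      rw [← ppi_alg p (Algebra.trace (ZMod p) L (aeval x f)), trace_eq_rs, hx, hfr, hPe, map_nsmul,
        AddChar.map_nsmul_eq_pow]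
      rfl
    rw [sum_congr rfl this, sum_const, hcard, nsmul_eq_mul]
  · intro x _
    simp only [mem_biUnion, Nat.mem_divisors, mem_Irr]
    refine ⟨_, ⟨?_, by omega⟩, ⟨minpoly.monic (hIntegral x), rfl⟩, minpoly.irreducible (hIntegral x)⟩
    have := minpoly.degree_dvd (hIntegral x)
    rwa [hfr] at this

lemma count_identity (k : ℕ) (g : (ZMod p)[X]) (hg : g ∈ Mon p k) :
    (k : ℂ) = ∑ j ∈ Icc 1 k, ∑ e ∈ j.divisors, ∑ P ∈ Irr p e,
      open Classical in if P ^ (j / e) ∣ g then (e : ℂ) else 0 := by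
  classical
  obtain ⟨hgm, hgk⟩ := (mem_Mon p _ _).1 hg
  have hg0 := hgm.ne_zero
  have step1 : ∑ j ∈ Icc 1 k, ∑ e ∈ j.divisors, ∑ P ∈ Irr p e,
      (if P ^ (j / e) ∣ g then (e : ℂ) else 0) = ∑ e ∈ Icc 1 k, ∑ m ∈ Icc 1 (k / e),
        ∑ P ∈ Irr p e, (if P ^ m ∣ g then (e : ℂ) else 0) := by
    rw [Finset.sum_sigma' (Icc 1 k) (fun j => j.divisors) (fun j e => ∑ P ∈ Irr p e, (if P ^ (j / e) ∣ g then (e : ℂ) else 0)),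
      Finset.sum_sigma' (Icc 1 k) (fun e => Icc 1 (k / e)) (fun e m => ∑ P ∈ Irr p e, (if P ^ m ∣ g then (e : ℂ) else 0))]
    refine Finset.sum_bij' (fun a _ => ⟨a.2, a.1 / a.2⟩) (fun b _ => ⟨b.1 * b.2, b.1⟩) ?_ ?_ ?_ ?_ ?_
    · rintro ⟨j, e⟩ h
      simp only [mem_sigma, mem_Icc, Nat.mem_divisors] at h ⊢
      obtain ⟨⟨h1, h2⟩, h3, h4⟩ := h
      have he : 0 < e := Nat.pos_of_dvd_of_pos h3 h1
      have := Nat.le_of_dvd h1 h3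
      exact ⟨⟨he, by omega⟩, Nat.div_pos this he, Nat.div_le_div_right h2⟩
    · rintro ⟨e, m⟩ h
      simp only [mem_sigma, mem_Icc, Nat.mem_divisors] at h ⊢
      obtain ⟨⟨h1, h2⟩, h3, h4⟩ := h
      have h5 : e * m ≤ k := by rw [mul_comm]; exact (Nat.le_div_iff_mul_le h1).1 h4
      have h6 : 0 < e * m := Nat.mul_pos h1 h3
      exact ⟨⟨h6, h5⟩, Dvd.intro _ rfl, by omega⟩
    · rintro ⟨j, e⟩ h
      simp only [mem_sigma, mem_Icc, Nat.mem_divisors] at h ⊢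
      rw [Nat.mul_div_cancel' h.2.1]
    · rintro ⟨e, m⟩ h
      simp only [mem_sigma, mem_Icc] at h ⊢
      rw [Nat.mul_div_cancel_left _ h.1.1]
    · rintro ⟨j, e⟩ h
      rfl
  have step2 : ∀ e ∈ Icc 1 k, ∑ m ∈ Icc 1 (k / e), ∑ P ∈ Irr p e, (if P ^ m ∣ g then (e : ℂ) else 0) =
      ∑ P ∈ Irr p e, (((UniqueFactorizationMonoid.normalizedFactors g).count P * P.natDegree : ℕ) : ℂ) := by
    intro e he
    rw [sum_comm]
    refine sum_congr rfl fun P hP => ?_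
    obtain ⟨⟨hPm, hPe⟩, hPi⟩ := (mem_Irr p _ _).1 hP
    set c := (UniqueFactorizationMonoid.normalizedFactors g).count P with hc
    have hdvd : ∀ m, P ^ m ∣ g ↔ m ≤ c := by
      intro m
      rw [pow_dvd_iff_le_emultiplicity,
        UniqueFactorizationMonoid.emultiplicity_eq_count_normalizedFactors hPi hg0,
        hPm.normalize_eq_self, Nat.cast_le]
    have hck : c ≤ k / e := by
      rw [Nat.le_div_iff_mul_le (mem_Icc.1 he).1]
      have := natDegree_le_of_dvd ((hdvd c).2 le_rfl) hg0
      rwa [natDegree_pow, hPe, hgk] at this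
    rw [← sum_filter, sum_const]
    have : (Icc 1 (k / e)).filter (fun m => P ^ m ∣ g) = Icc 1 c := by
      ext m; simp only [mem_filter, mem_Icc, hdvd]; omega
    rw [this, Nat.card_Icc, hPe]; simp
  rw [step1, sum_congr rfl step2, ← sum_biUnion (irr_disj p _)]
  have h3 : (UniqueFactorizationMonoid.normalizedFactors g).prod.natDegree = k := by
    rw [← hgk]
    exact natDegree_eq_of_degree_eq (degree_eq_degree_of_associated
      (UniqueFactorizationMonoid.prod_normalizedFactors hg0))
  rw [natDegree_multiset_prod _ (UniqueFactorizationMonoid.zero_notMem_normalizedFactors g),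
    Finset.sum_multiset_map_count] at h3
  rw [← Nat.cast_sum, Nat.cast_inj]
  conv_lhs => rw [← h3]
  simp only [smul_eq_mul]
  refine sum_subset ?_ ?_
  · intro P hP
    rw [Multiset.mem_toFinset] at hP
    have hi := UniqueFactorizationMonoid.irreducible_of_normalized_factor P hP
    have hd := UniqueFactorizationMonoid.dvd_of_mem_normalizedFactors hP
    have hm : P.Monic := by
      have := UniqueFactorizationMonoid.normalize_normalized_factor P hP
      rw [← this]; exact monic_normalize hi.ne_zero
    simp only [mem_biUnion, mem_Icc, mem_Irr]
    exact ⟨P.natDegree, ⟨hi.natDegree_pos, hgk ▸ natDegree_le_of_dvd hd hg0⟩, ⟨hm, rfl⟩, hi⟩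
  · intro P _ hP
    rw [Multiset.mem_toFinset] at hP
    rw [Multiset.count_eq_zero_of_notMem hP, zero_mul]

lemma newton (k : ℕ) : (k : ℂ) * AA p f ψ k = ∑ j ∈ Icc 1 k, Lam p f ψ j * AA p f ψ (k - j) := by
  classical
  have h1 : (k : ℂ) * AA p f ψ k = ∑ g ∈ Mon p k, ∑ j ∈ Icc 1 k, ∑ e ∈ j.divisors, ∑ P ∈ Irr p e,
      (if P ^ (j / e) ∣ g then (e : ℂ) * ch p f ψ g else 0) := by
    rw [AA, mul_sum]
    refine sum_congr rfl fun g hg => ?_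
    rw [count_identity p k g hg]
    simp only [sum_mul, ite_mul, zero_mul]
  rw [h1, sum_comm]
  refine sum_congr rfl fun j hj => ?_
  rw [sum_comm, Lam, sum_mul]
  refine sum_congr rfl fun e he => ?_
  rw [sum_comm, sum_mul]
  refine sum_congr rfl fun P hP => ?_
  obtain ⟨⟨hPm, hPe⟩, hPi⟩ := (mem_Irr p _ _).1 hP
  obtain ⟨hj1, hjk⟩ := mem_Icc.1 hj
  have hQm : (P ^ (j / e)).Monic := hPm.pow _
  have hQd : (P ^ (j / e)).natDegree = j := by
    rw [natDegree_pow, hPe, Nat.div_mul_cancel (Nat.dvd_of_mem_divisors he)]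
  rw [← sum_filter, AA, mul_sum]
  symm
  refine Finset.sum_bij (fun h _ => P ^ (j / e) * h) ?_ ?_ ?_ ?_
  · intro h hh
    obtain ⟨hm, hd⟩ := (mem_Mon p _ _).1 hh
    rw [mem_filter, mem_Mon]
    refine ⟨⟨hQm.mul hm, ?_⟩, Dvd.intro _ rfl⟩
    rw [hQm.natDegree_mul hm, hQd, hd]; omega
  · intro a _ b _ hab
    exact mul_left_cancel₀ hQm.ne_zero hab
  · intro g hg
    rw [mem_filter, mem_Mon] at hg
    obtain ⟨⟨hgm, hgd⟩, h, rfl⟩ := hg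
    have hm := hQm.of_mul_monic_left hgm
    refine ⟨h, (mem_Mon p _ _).2 ⟨hm, ?_⟩, rfl⟩
    rw [hQm.natDegree_mul hm, hQd] at hgd; omega
  · intro h hh
    obtain ⟨hm, hd⟩ := (mem_Mon p _ _).1 hh
    rw [ch_mul _ _ _ _ _ hQm.ne_zero hm.ne_zero, ch_pow _ _ _ _ hPm.ne_zero]; ring
end
end KW

namespace KW
open Polynomial

/-- power sums of a multiset -/
def pm {K : Type*} [CommRing K] (m : Multiset K) (j : ℕ) : K := (m.map (fun a => a ^ j)).sum

lemma multiset_newton {K : Type*} [CommRing K] (m : Multiset K) (k : ℕ) (hk : 0 < k) :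
    pm m k = (-1) ^ (k + 1) * k * m.esymm k -
      ∑ a ∈ antidiagonal k with a.1 ∈ Set.Ioo 0 k, (-1) ^ a.1 * m.esymm a.1 * pm m a.2 := by
  classical
  obtain ⟨l, rfl⟩ := Quot.exists_rep m
  have hl : (univ : Finset (Fin l.length)).val.map l.get = (l : Multiset K) := by
    simp [Fin.univ_val_map]
  have hp : ∀ j, MvPolynomial.aeval l.get (MvPolynomial.psum (Fin l.length) ℤ j) = pm (l : Multiset K) j := by
    intro j
    rw [MvPolynomial.psum, map_sum, pm, ← hl, Multiset.map_map]
    simp [Finset.sum]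
  have he : ∀ j, MvPolynomial.aeval l.get (MvPolynomial.esymm (Fin l.length) ℤ j) = (l : Multiset K).esymm j := by
    intro j
    rw [MvPolynomial.aeval_esymm_eq_multiset_esymm, hl]
  have := congrArg (MvPolynomial.aeval l.get) (MvPolynomial.psum_eq_mul_esymm_sub_sum (Fin l.length) ℤ k hk)
  simp only [map_sub, map_sum, map_mul, map_pow, map_neg, map_one, map_natCast, hp, he] at this
  exact this

lemma pm_eq {K : Type*} [CommRing K] (m m' : Multiset K) (hc : m.card = m'.card) (d : ℕ)
    (h : ∀ i, i < d → m.esymm i = m'.esymm i) : ∀ j, j < d → pm m j = pm m' j := by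
  intro j
  induction j using Nat.strong_induction_on with
  | _ j ih =>
    intro hj
    rcases Nat.eq_zero_or_pos j with rfl | hj0
    · simp [pm, hc]
    · rw [multiset_newton m j hj0, multiset_newton m' j hj0, h j hj]
      congr 1
      refine sum_congr rfl fun a ha => ?_
      simp only [mem_filter, HasAntidiagonal.mem_antidiagonal, Set.mem_Ioo] at ha
      rw [h a.1 (by omega), ih a.2 (by omega) (by omega)]

lemma pm_diff {K : Type*} [CommRing K] (m m' : Multiset K) (hc : m.card = m'.card) (d : ℕ) (hd : 0 < d)
    (h : ∀ i, i < d → m.esymm i = m'.esymm i) :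
    pm m d - pm m' d = (-1) ^ (d + 1) * d * (m.esymm d - m'.esymm d) := by
  have : ∑ a ∈ antidiagonal d with a.1 ∈ Set.Ioo 0 d, (-1) ^ a.1 * m.esymm a.1 * pm m a.2 =
      ∑ a ∈ antidiagonal d with a.1 ∈ Set.Ioo 0 d, (-1) ^ a.1 * m'.esymm a.1 * pm m' a.2 := by
    refine sum_congr rfl fun a ha => ?_
    simp only [mem_filter, HasAntidiagonal.mem_antidiagonal, Set.mem_Ioo] at ha
    rw [h a.1 (by omega), pm_eq m m' hc d h a.2 (by omega)]
  rw [multiset_newton m d hd, multiset_newton m' d hd, this]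
  ring

section
variable (p : ℕ) [hp : Fact p.Prime] (f : (ZMod p)[X]) (ψ : AddChar (ZMod p) ℂ)

lemma rs_eq (g : (ZMod p)[X]) : rs p f g =
    ∑ j ∈ range (f.natDegree + 1), algebraMap (ZMod p) (KK p) (f.coeff j) * pm (g.aroots (KK p)) j := by
  unfold rs pm
  simp_rw [aeval_eq_sum_range, Algebra.smul_def]
  induction (g.aroots (KK p)) using Multiset.induction_on with
  | empty => simp
  | cons a s ih => 
    simp only [Multiset.map_cons, Multiset.sum_cons, ih, mul_add, sum_add_distrib]

lemma rs_shift (g g' : (ZMod p)[X]) (k : ℕ) (hg : g.Monic) (hgk : g.natDegree = k) (hg' : g'.Monic)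
    (hgk' : g'.natDegree = k) (hd : 1 ≤ f.natDegree) (hdk : f.natDegree ≤ k)
    (h : ∀ i, i < f.natDegree → g.coeff (k - i) = g'.coeff (k - i)) :
    rs p f g = rs p f g' + algebraMap (ZMod p) (KK p) (- (f.natDegree * f.leadingCoeff *
      (g.coeff (k - f.natDegree) - g'.coeff (k - f.natDegree)))) := by
  set d := f.natDegree with hdd
  have hes : ∀ q : (ZMod p)[X], q.Monic → q.natDegree = k → 
      (q.aroots (KK p)).card = k ∧ ∀ i ≤ k, algebraMap (ZMod p) (KK p) (q.coeff (k - i)) =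
      (-1) ^ i * (q.aroots (KK p)).esymm i := by
    intro q hq hqk
    have hs : (q.map (algebraMap (ZMod p) (KK p))).Splits := IsAlgClosed.splits _
    have hdeg : (q.map (algebraMap (ZMod p) (KK p))).natDegree = k := by rw [natDegree_map, hqk]
    refine ⟨by rw [aroots, ← hs.natDegree_eq_card_roots, hdeg], fun i hi => ?_⟩
    have := coeff_eq_esymm_roots_of_splits hs (k := k - i) (by omega)
    rw [coeff_map, (hq.map _).leadingCoeff, hdeg, Nat.sub_sub_self hi, one_mul] at this
    exact this
  obtain ⟨hc, h1⟩ := hes g hg hgk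
  obtain ⟨hc', h1'⟩ := hes g' hg' hgk'
  have hee : ∀ i, i < d → (g.aroots (KK p)).esymm i = (g'.aroots (KK p)).esymm i := by
    intro i hi
    have := h1 i (by omega)
    rw [h i hi, h1' i (by omega)] at this
    exact (mul_left_cancel₀ (pow_ne_zero _ (by simp)) this).symm
  have hcc := hc.trans hc'.symm
  have h2 := pm_diff _ _ hcc d hd hee
  have h3 := pm_eq _ _ hcc d hee
  rw [← sub_eq_iff_eq_add', rs_eq, rs_eq, ← sum_sub_distrib, sum_range_succ, ← hdd]
  rw [sum_eq_zero (fun j hj => by rw [h3 j (mem_range.1 hj), sub_self]), zero_add, ← mul_sub, h2]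
  rw [leadingCoeff, ← hdd]
  simp only [map_neg, map_mul, map_sub, map_natCast, h1 d hdk, h1' d hdk]
  ring

lemma AA_zero_of_ge (hd : 1 ≤ f.natDegree) (hpd : ¬ p ∣ f.natDegree) (hψ : ψ ≠ 1) (k : ℕ)
    (hk : f.natDegree ≤ k) : AA p f ψ k = 0 := by
  classical
  obtain ⟨b, hb⟩ := AddChar.ne_one_iff.1 hψ
  have hf0 : f.leadingCoeff ≠ 0 := by
    rw [Ne, leadingCoeff_eq_zero]; rintro rfl; simp at hd
  have hd0 : (f.natDegree : ZMod p) ≠ 0 := by rwa [Ne, ZMod.natCast_eq_zero_iff]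
  set c : ZMod p := - b / (f.natDegree * f.leadingCoeff) with hc
  have hcb : - (f.natDegree * f.leadingCoeff * c) = b := by rw [hc]; field_simp
  have key : AA p f ψ k = ψ b * AA p f ψ k := by
    conv_rhs => rw [AA, mul_sum]
    rw [AA]
    symm
    have hm : ∀ (e : ZMod p) (g : (ZMod p)[X]), g ∈ Mon p k → g + C e * X ^ (k - f.natDegree) ∈ Mon p k := by
      intro e g hg
      rw [mem_Mon] at hg ⊢
      obtain ⟨h1, h2⟩ := hg
      have hlt : (C e * X ^ (k - f.natDegree)).degree < g.degree := by
        rw [degree_eq_natDegree h1.ne_zero, h2]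
        refine lt_of_le_of_lt (degree_C_mul_X_pow_le _ _) ?_
        exact_mod_cast (by omega : k - f.natDegree < k)
      refine ⟨h1.add_of_left hlt, ?_⟩
      exact (natDegree_eq_of_degree_eq (degree_add_eq_left_of_degree_lt hlt)).trans h2
    refine Finset.sum_bij' (fun g _ => g + C c * X ^ (k - f.natDegree))
      (fun g _ => g + C (-c) * X ^ (k - f.natDegree)) (fun g hg => hm _ g hg) (fun g hg => hm _ g hg) ?_ ?_ ?_
    · intro g _; simp
    · intro g _; simp
    · intro g hg
      have h1 := (mem_Mon p k g).1 hg
      have h2 := (mem_Mon p k _).1 (hm c g hg)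
      have := rs_shift p f _ g k h2.1 h2.2 h1.1 h1.2 hd hk (by
        intro i hi
        simp only [coeff_add, coeff_C_mul, coeff_X_pow]
        rw [if_neg (by omega)]; simp)
      rw [ch, ch, this, map_add, ppi_alg, AddChar.map_add_eq_mul, mul_comm]
      congr 2
      simp only [coeff_add, coeff_C_mul, coeff_X_pow, if_true]
      rw [← hcb]; ring
  have : (1 - ψ b) * AA p f ψ k = 0 := by rw [sub_mul, one_mul, ← key, sub_self]
  rcases mul_eq_zero.1 this with h | h
  · exact absurd (sub_eq_zero.1 h).symm hb
  · exact h
end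
end KW

namespace KW
open Polynomial

lemma no_root (a L : ℕ → ℂ) (d : ℕ) (ha0 : a 0 = 1) (had : ∀ k, d ≤ k → a k = 0)
    (hN : ∀ k : ℕ, (k : ℂ) * a k = ∑ j ∈ Icc 1 k, L j * a (k - j)) (C R : ℝ) (hC : 0 ≤ C) (hR : 0 < R)
    (hL : ∀ j, 1 ≤ j → ‖L j‖ ≤ C * R ^ j) (A : ℂ[X]) (hA : ∀ k, A.coeff k = a k) (t0 : ℂ)
    (hroot : A.eval t0 = 0) : 1 ≤ ‖t0‖ * R := by
  by_contra hlt
  push Not at hlt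
  obtain ⟨r, hr1, hr2⟩ := exists_between hlt
  have hr0 : 0 < r := lt_of_le_of_lt (by positivity) hr1
  set L' : ℕ → ℂ := fun j => if j = 0 then 0 else L j with hL'
  have hL'b : ∀ j, ‖L' j‖ ≤ C * R ^ j := by
    intro j
    simp only [hL']
    split_ifs with h
    · simp; positivity
    · exact hL j (by omega)
  set F : ℂ → ℂ := fun t => ∑' j, L' j * t ^ j with hF
  have hbd : ∀ t : ℂ, ‖t‖ * R ≤ r → ∀ j, ‖L' j * t ^ j‖ ≤ C * r ^ j := by
    intro t ht j
    rw [norm_mul, norm_pow]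
    calc _ ≤ C * R ^ j * ‖t‖ ^ j := by gcongr; exact hL'b j
      _ = C * (‖t‖ * R) ^ j := by rw [mul_pow]; ring
      _ ≤ _ := by gcongr
  have hgeo : Summable fun j : ℕ => C * r ^ j := (summable_geometric_of_lt_one hr0.le hr2).mul_left C
  have hsum : ∀ t : ℂ, ‖t‖ * R ≤ r → Summable fun j => ‖L' j * t ^ j‖ := fun t ht =>
    Summable.of_nonneg_of_le (fun _ => norm_nonneg _) (hbd t ht) hgeo
  have hFb : ∀ t : ℂ, ‖t‖ * R ≤ r → ‖F t‖ ≤ ∑' j : ℕ, C * r ^ j := fun t ht =>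
    tsum_of_norm_bounded hgeo.hasSum (hbd t ht)
  have hdeg : A.natDegree < d + 1 := by
    rw [Nat.lt_succ_iff, natDegree_le_iff_coeff_eq_zero]
    intro N hN; rw [hA, had N hN.le]
  have hAt : ∀ t : ℂ, HasSum (fun k => a k * t ^ k) (A.eval t) := by
    intro t
    rw [eval_eq_sum_range' hdeg]
    simp_rw [hA]
    apply hasSum_sum_of_ne_finset_zero
    intro k hk
    rw [had k (by simp at hk; omega), zero_mul]
  have hdA : ∀ t : ℂ, HasSum (fun k : ℕ => (k : ℂ) * a k * t ^ k) (t * A.derivative.eval t) := by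
    intro t
    have : (X * A.derivative).natDegree < d + 1 := by
      rw [Nat.lt_succ_iff, natDegree_le_iff_coeff_eq_zero]
      intro N hN
      obtain ⟨n, rfl⟩ : ∃ n, N = n + 1 := ⟨N - 1, by omega⟩
      rw [coeff_X_mul, coeff_derivative, hA, had _ hN.le, zero_mul]
    have h2 : ∀ k : ℕ, (X * A.derivative).coeff k = (k : ℂ) * a k := by
      intro k
      cases k with
      | zero => simp
      | succ n => rw [coeff_X_mul, coeff_derivative, hA]; push_cast; ring
    have h3 : t * A.derivative.eval t = (X * A.derivative).eval t := by simp
    rw [h3, eval_eq_sum_range' this]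
    simp_rw [h2]
    apply hasSum_sum_of_ne_finset_zero
    intro k hk
    rw [had k (by simp at hk; omega)]; simp
  have hid : ∀ t : ℂ, ‖t‖ * R ≤ r → t * A.derivative.eval t = F t * A.eval t := by
    intro t ht
    have hs2 : Summable fun k => ‖a k * t ^ k‖ := by
      apply summable_of_ne_finset_zero (s := range d)
      intro k hk
      rw [had k (by simpa using hk)]; simp
    rw [← (hdA t).tsum_eq, ← (hAt t).tsum_eq, hF]
    simp only
    rw [tsum_mul_tsum_eq_tsum_sum_antidiagonal_of_summable_norm (hsum t ht) hs2]
    refine tsum_congr fun k => ?_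
    rw [Finset.Nat.sum_antidiagonal_eq_sum_range_succ_mk, hN k, sum_range_succ', sum_mul]
    simp only [hL']
    rw [← Finset.Ico_add_one_right_eq_Icc, sum_Ico_eq_sum_range]
    simp only [Nat.add_sub_cancel, if_true, zero_mul, add_zero]
    refine sum_congr rfl fun i hi => ?_
    rw [mem_range] at hi
    rw [if_neg (by omega), add_comm 1 i]
    have : t ^ k = t ^ (i+1) * t ^ (k - (i+1)) := by rw [← pow_add]; congr 1; omega
    rw [this]; ring
  have hA0 : A ≠ 0 := by
    intro h; have := hA 0; rw [h, ha0] at this; simp at this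
  obtain ⟨Q, hQ, hQd⟩ := exists_eq_pow_rootMultiplicity_mul_and_not_dvd A hA0 t0
  have hm : 0 < A.rootMultiplicity t0 := (rootMultiplicity_pos hA0).2 hroot
  obtain ⟨m, hm'⟩ : ∃ m, A.rootMultiplicity t0 = m + 1 := ⟨_, (Nat.succ_pred_eq_of_pos hm).symm⟩
  rw [hm'] at hQ
  have hQ0 : Q.eval t0 ≠ 0 := by rwa [Ne, ← IsRoot.def, ← dvd_iff_isRoot]
  have ht00 : t0 ≠ 0 := by
    rintro rfl
    rw [← coeff_zero_eq_eval_zero, hA, ha0] at hroot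
    exact one_ne_zero hroot
  have hder : A.derivative = (X - Polynomial.C t0) ^ m * ((m + 1 : ℂ[X]) * Q + (X - Polynomial.C t0) * Q.derivative) := by
    conv_lhs => rw [hQ]
    rw [derivative_mul, derivative_X_sub_C_pow]; push_cast; simp; ring
  have heq : ∀ t : ℂ, ‖t‖ * R ≤ r → t ≠ t0 →
      t * ((m + 1) * Q.eval t + (t - t0) * Q.derivative.eval t) = F t * ((t - t0) * Q.eval t) := by
    intro t ht hne
    have h := hid t ht
    rw [hder] at h
    conv_rhs at h => rw [hQ]
    simp only [eval_mul, eval_pow, eval_sub, eval_X, eval_C, eval_add, eval_natCast, eval_one] at h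
    have h3 : (t - t0) ^ m ≠ 0 := pow_ne_zero _ (sub_ne_zero.2 hne)
    apply mul_left_cancel₀ h3
    rw [pow_succ] at h
    linear_combination h
  have hl1 : Filter.Tendsto (fun t => t * ((m + 1) * Q.eval t + (t - t0) * Q.derivative.eval t))
      (nhdsWithin t0 {t0}ᶜ) (nhds (t0 * ((m + 1) * Q.eval t0 + (t0 - t0) * Q.derivative.eval t0))) := by
    apply Filter.Tendsto.mono_left _ nhdsWithin_le_nhds
    apply Continuous.tendsto (f := fun t => t * ((m + 1) * Q.eval t + (t - t0) * Q.derivative.eval t))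
    fun_prop
  have hnear : ∀ᶠ t in nhdsWithin t0 {t0}ᶜ, ‖t‖ * R ≤ r ∧ t ≠ t0 := by
    apply Filter.Eventually.and
    · apply Filter.Eventually.filter_mono nhdsWithin_le_nhds
      have : Filter.Tendsto (fun t : ℂ => ‖t‖ * R) (nhds t0) (nhds (‖t0‖ * R)) := by
        apply Continuous.tendsto (f := fun t : ℂ => ‖t‖ * R); fun_prop
      exact this.eventually_le_const hr1
    · exact self_mem_nhdsWithin
  have hl2 : Filter.Tendsto (fun t => t * ((m + 1) * Q.eval t + (t - t0) * Q.derivative.eval t))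
      (nhdsWithin t0 {t0}ᶜ) (nhds 0) := by
    have hb : Filter.Tendsto (fun t : ℂ => (∑' j : ℕ, C * r ^ j) * ‖(t - t0) * Q.eval t‖)
        (nhdsWithin t0 {t0}ᶜ) (nhds 0) := by
      apply Filter.Tendsto.mono_left _ nhdsWithin_le_nhds
      have : Continuous (fun t : ℂ => (∑' j : ℕ, C * r ^ j) * ‖(t - t0) * Q.eval t‖) := by fun_prop
      simpa using this.tendsto t0
    apply squeeze_zero_norm' _ hb
    filter_upwards [hnear] with t ht
    rw [heq t ht.1 ht.2, norm_mul]
    gcongr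
    exact hFb t ht.1
  have := tendsto_nhds_unique hl1 hl2
  rw [sub_self, zero_mul, add_zero] at this
  have hm1 : (m + 1 : ℂ) ≠ 0 := Nat.cast_add_one_ne_zero m
  exact mul_ne_zero ht00 (mul_ne_zero hm1 hQ0) this

lemma a1_bound (a L : ℕ → ℂ) (d : ℕ) (hd : 1 ≤ d) (ha0 : a 0 = 1) (had : ∀ k, d ≤ k → a k = 0)
    (hN : ∀ k : ℕ, (k : ℂ) * a k = ∑ j ∈ Icc 1 k, L j * a (k - j)) (C R : ℝ) (hC : 0 ≤ C) (hR : 0 < R)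
    (hL : ∀ j, 1 ≤ j → ‖L j‖ ≤ C * R ^ j) : ‖a 1‖ ≤ (d - 1 : ℝ) * R := by
  set A : ℂ[X] := ∑ k ∈ range d, Polynomial.C (a k) * X ^ k with hAdef
  have hA : ∀ k, A.coeff k = a k := by
    intro k
    rw [hAdef, finsetSum_coeff]
    simp only [coeff_C_mul, coeff_X_pow, mul_ite, mul_one, mul_zero]
    rw [Finset.sum_ite_eq]
    split_ifs with h
    · rfl
    · rw [had k (by simpa using h)]
  have hdeg : A.natDegree ≤ d - 1 := by
    rw [natDegree_le_iff_coeff_eq_zero]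
    intro N hN; rw [hA, had N (by omega)]
  have hA0 : A ≠ 0 := by
    intro h; have := hA 0; rw [h, ha0] at this; simp at this
  have htr : A.natTrailingDegree = 0 := by
    apply natTrailingDegree_eq_zero_of_constantCoeff_ne_zero
    rw [constantCoeff_apply, hA, ha0]; exact one_ne_zero
  set B := A.reverse with hB
  have hBd : B.natDegree = A.natDegree := by rw [hB, reverse_natDegree, htr, Nat.sub_zero]
  have hBm : B.Monic := by
    rw [Monic, hB, reverse_leadingCoeff, trailingCoeff, htr, hA, ha0]
  have hs : B.Splits := IsAlgClosed.splits B
  have hnc : B.nextCoeff = a 1 := by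
    rw [← coeff_one_reverse, coeff_reverse, hBd, hB, coeff_reverse, revAt_invol, hA]
  have hroots : ∀ w ∈ B.roots, ‖w‖ ≤ R := by
    intro w hw
    have hw := (mem_roots hBm.ne_zero).1 hw
    by_cases hw0 : w = 0
    · rw [hw0]; simpa using hR.le
    · have : Invertible (w⁻¹) := invertibleOfNonzero (inv_ne_zero hw0)
      have h1 := eval₂_reverse_eq_zero_iff (RingHom.id ℂ) (w⁻¹) A
      rw [invOf_eq_inv, inv_inv] at h1
      have h2 := no_root a L d ha0 had hN C R hC hR hL A hA w⁻¹ (h1.1 hw)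
      rw [norm_inv] at h2
      have hwp : 0 < ‖w‖ := norm_pos_iff.2 hw0
      rwa [inv_mul_eq_div, one_le_div hwp] at h2
  rw [← hnc, hs.nextCoeff_eq_neg_sum_roots_of_monic hBm, norm_neg]
  have hcard : B.roots.card ≤ d - 1 := (card_roots' B).trans (hBd ▸ hdeg)
  have key : ∀ m : Multiset ℂ, (∀ w ∈ m, ‖w‖ ≤ R) → ‖m.sum‖ ≤ m.card * R := by
    intro m
    induction m using Multiset.induction_on with
    | empty => simp
    | cons x s ih =>
      intro h
      rw [Multiset.sum_cons, Multiset.card_cons]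
      have h1 := h x (Multiset.mem_cons_self _ _)
      have h2 := ih fun w hw => h w (Multiset.mem_cons_of_mem hw)
      push_cast
      linarith [norm_add_le x s.sum]
  refine (key _ hroots).trans ?_
  gcongr
  rw [le_sub_iff_add_le]
  exact_mod_cast (by omega : B.roots.card + 1 ≤ d)

section
variable (p : ℕ) [hp : Fact p.Prime] (f : (ZMod p)[X]) (ψ : AddChar (ZMod p) ℂ)

lemma AA_zero : AA p f ψ 0 = 1 := by
  have : Mon p 0 = {1} := by
    ext g; rw [mem_Mon, mem_singleton]
    constructor
    · rintro ⟨h1, h2⟩; exact h1.natDegree_eq_zero.1 h2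
    · rintro rfl; simp
  rw [AA, this, sum_singleton, ch_one]

theorem weil (hd : 1 ≤ f.natDegree) (hpd : ¬ p ∣ f.natDegree) (hψ : ψ ≠ 1) :
    ‖∑ x : ZMod p, ψ (f.eval x)‖ ≤ (f.natDegree - 1 : ℝ) * Real.sqrt p := by
  have hLam1 : ∑ x : ZMod p, ψ (f.eval x) = Lam p f ψ 1 := by
    rw [← charSum_eq_Lam p f ψ 1 le_rfl (L := ZMod p) (by rw [ZMod.card, pow_one])]
    refine sum_congr rfl fun x _ => ?_
    rw [Algebra.trace_self_apply]; simp [coe_aeval_eq_eval]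
  have hAA1 : AA p f ψ 1 = Lam p f ψ 1 := by
    have := newton p f ψ 1
    simpa [AA_zero] using this
  rw [hLam1, ← hAA1]
  have hp0 : (0:ℝ) < p := by exact_mod_cast hp.out.pos
  have hp1 : (1:ℝ) ≤ p := by exact_mod_cast hp.out.one_le
  refine a1_bound (AA p f ψ) (Lam p f ψ) _ hd (AA_zero p f ψ) (AA_zero_of_ge p f ψ hd hpd hψ) (newton p f ψ)
    (2 * p ^ 2 * (3 * f.natDegree + 3)) (Real.sqrt p) (by positivity) (Real.sqrt_pos.2 hp0) ?_
  intro j hj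
  rcases Nat.lt_or_ge 1 j with h | h
  · have : Fintype (GaloisField p j) := Fintype.ofFinite _
    have hc : Fintype.card (GaloisField p j) = p ^ j := by
      rw [← Nat.card_eq_fintype_card, GaloisField.card p j (by omega)]
    rw [← charSum_eq_Lam p f ψ j hj hc]
    exact charSum_bound p f hd hpd ψ hψ j h hc
  · obtain rfl : j = 1 := by omega
    rw [← hLam1]
    refine (norm_sum_le _ _).trans ?_
    simp only [norm_addChar, sum_const, card_univ, ZMod.card, nsmul_eq_mul, mul_one, pow_one]
    have hs : 1 ≤ Real.sqrt p := Real.one_le_sqrt.2 hp1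
    have : (0:ℝ) ≤ f.natDegree := by positivity
    calc (p:ℝ) ≤ p ^ 2 := by nlinarith
      _ ≤ 2 * p ^ 2 * (3 * f.natDegree + 3) := by nlinarith [sq_nonneg (p:ℝ), mul_nonneg (sq_nonneg (p:ℝ)) this]
      _ ≤ _ := le_mul_of_one_le_right (by positivity) hs

theorem weil' (s : ℕ) (h : Fin s → ZMod p) (hh : h ≠ 0) (hψ : ψ ≠ 1) :
    ‖∑ x : ZMod p, ψ (∑ j, h j * x ^ (j.1 + 1))‖ ≤ s * Real.sqrt p := by
  have hp1 : (1:ℝ) ≤ p := by exact_mod_cast hp.out.one_le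
  have hs : 1 ≤ Real.sqrt p := Real.one_le_sqrt.2 hp1
  rcases Nat.lt_or_ge s p with hsp | hsp
  · set F : (ZMod p)[X] := ∑ j : Fin s, C (h j) * X ^ (j.1 + 1) with hF
    have hc : ∀ j : Fin s, F.coeff (j.1 + 1) = h j := by
      intro j
      rw [hF, finsetSum_coeff]
      simp only [coeff_C_mul, coeff_X_pow, mul_ite, mul_one, mul_zero]
      rw [Finset.sum_eq_single j]
      · simp
      · intro b _ hb; rw [if_neg]; intro h; apply hb; ext; omega
      · simp
    obtain ⟨j, hj⟩ : ∃ j, h j ≠ 0 := by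
      by_contra hcon; push Not at hcon; exact hh (funext hcon)
    have hd1 : 1 ≤ F.natDegree := by
      have := le_natDegree_of_ne_zero (p := F) (n := j.1 + 1) (by rwa [hc])
      omega
    have hds : F.natDegree ≤ s := by
      rw [hF]
      refine natDegree_sum_le_of_forall_le _ _ fun i _ => ?_
      refine (natDegree_C_mul_X_pow_le _ _).trans (by have := i.2; omega)
    have hpd : ¬ p ∣ F.natDegree := fun hdvd => by
      have := Nat.le_of_dvd hd1 hdvd; omega
    have := weil p F ψ hd1 hpd hψ
    simp only [hF, eval_finsetSum, eval_mul, eval_C, eval_pow, eval_X] at this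
    refine this.trans ?_
    rw [← hF]
    gcongr
    have : (F.natDegree : ℝ) ≤ s := by exact_mod_cast hds
    linarith
  · refine (norm_sum_le _ _).trans ?_
    simp only [norm_addChar, sum_const, card_univ, ZMod.card, nsmul_eq_mul, mul_one]
    have : (p:ℝ) ≤ s := by exact_mod_cast hsp
    nlinarith
end
end KW

namespace KW

section
variable (p : ℕ) [hp : Fact p.Prime]

/-- `f` has absolutely summable Fourier coefficients with sum at most `A`. -/
def IsA (f : ZMod p → ℝ) (A : ℝ) : Prop :=
  ∃ c : ZMod p → ℂ, (∀ k, (f k : ℂ) = ∑ h, c h * ZMod.stdAddChar (h * k)) ∧ ∑ h, ‖c h‖ ≤ A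

noncomputable def avg (f : ZMod p → ℝ) : ℝ := (∑ k, f k) / p

lemma orth (b : ZMod p) : ∑ h : ZMod p, (ZMod.stdAddChar (h * b) : ℂ) = if b = 0 then (p : ℂ) else 0 := by
  rw [AddChar.sum_mulShift b (ZMod.isPrimitive_stdAddChar p), ZMod.card]
  push_cast; rfl

lemma IsA.nonneg {f : ZMod p → ℝ} {A : ℝ} (h : IsA p f A) : 0 ≤ A := by
  obtain ⟨c, _, h⟩ := h
  exact le_trans (sum_nonneg fun _ _ => norm_nonneg _) h

lemma IsA.mono {f : ZMod p → ℝ} {A B : ℝ} (h : IsA p f A) (hAB : A ≤ B) : IsA p f B := by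
  obtain ⟨c, h1, h⟩ := h
  exact ⟨c, h1, h.trans hAB⟩

lemma IsA.plus {f g : ZMod p → ℝ} {A B : ℝ} (hf : IsA p f A) (hg : IsA p g B) :
    IsA p (fun k => f k + g k) (A + B) := by
  obtain ⟨c, h1, h2⟩ := hf
  obtain ⟨c', h1', h2'⟩ := hg
  refine ⟨fun h => c h + c' h, fun k => ?_, ?_⟩
  · push_cast
    rw [h1, h1', ← sum_add_distrib]
    exact sum_congr rfl fun h _ => by ring
  · refine (sum_le_sum fun h _ => norm_add_le _ _).trans ?_
    rw [sum_add_distrib]; linarith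

lemma IsA.smul {f : ZMod p → ℝ} {A : ℝ} (hf : IsA p f A) (r : ℝ) (hr : 0 ≤ r) :
    IsA p (fun k => r * f k) (r * A) := by
  obtain ⟨c, h1, h2⟩ := hf
  refine ⟨fun h => r * c h, fun k => ?_, ?_⟩
  · push_cast
    rw [h1, mul_sum]
    exact sum_congr rfl fun h _ => by ring
  · simp only [norm_mul, Complex.norm_real, Real.norm_eq_abs, abs_of_nonneg hr]
    rw [← mul_sum]
    gcongr

lemma isA_zero (A : ℝ) (hA : 0 ≤ A) : IsA p (fun _ => 0) A :=
  ⟨fun _ => 0, fun k => by simp, by simpa using hA⟩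

lemma isA_one : IsA p (fun _ => 1) 1 := by
  classical
  refine ⟨fun h => if h = 0 then 1 else 0, fun k => by simp, ?_⟩
  rw [sum_eq_single 0] <;> simp +contextual

lemma avg_eq {f : ZMod p → ℝ} {c : ZMod p → ℂ} (h : ∀ k, (f k : ℂ) = ∑ h, c h * ZMod.stdAddChar (h * k)) :
    ((avg p f : ℝ) : ℂ) = c 0 := by
  have hp0 : (p : ℂ) ≠ 0 := by exact_mod_cast hp.out.ne_zero
  rw [avg]; push_cast
  simp_rw [h]
  rw [sum_comm]
  simp_rw [← mul_sum]
  have : ∀ b : ZMod p, ∑ i : ZMod p, (ZMod.stdAddChar (b * i) : ℂ) = if b = 0 then (p : ℂ) else 0 := by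
    intro b; rw [← orth]; exact sum_congr rfl fun i _ => by rw [mul_comm]
  simp_rw [this]
  simp [hp0]

/-- representation count -/
def conv (I J : Finset (ZMod p)) (k : ZMod p) : ℕ := (I.filter (fun m => k - m ∈ J)).card

lemma parseval (I : Finset (ZMod p)) :
    ∑ h : ZMod p, ‖∑ m ∈ I, (ZMod.stdAddChar (-(h * m)) : ℂ)‖ ^ 2 = p * I.card := by
  have : ((∑ h : ZMod p, ‖∑ m ∈ I, (ZMod.stdAddChar (-(h * m)) : ℂ)‖ ^ 2 : ℝ) : ℂ) = (p * I.card : ℝ) := by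
    push_cast
    simp_rw [← Complex.mul_conj', map_sum, ← AddChar.map_neg_eq_conj, sum_mul_sum, ← AddChar.map_add_eq_mul]
    rw [sum_comm]
    have : ∀ m ∈ I, ∑ h : ZMod p, ∑ m' ∈ I, (ZMod.stdAddChar (-(h * m) + -(-(h * m'))) : ℂ) = p := by
      intro m hm
      rw [sum_comm]
      have : ∀ m', ∑ h : ZMod p, (ZMod.stdAddChar (-(h * m) + -(-(h * m'))) : ℂ) = if m' = m then (p:ℂ) else 0 := by
        intro m'
        have := orth p (m' - m)
        simp only [sub_eq_zero] at this
        rw [← this]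
        refine sum_congr rfl fun h _ => ?_
        congr 1; ring
      simp_rw [this]
      rw [sum_ite_eq', if_pos hm]
    rw [sum_congr rfl this, sum_const, nsmul_eq_mul]; ring
  exact_mod_cast this

lemma isA_conv (I J : Finset (ZMod p)) : IsA p (fun k => (conv p I J k : ℝ)) (Real.sqrt (I.card * J.card)) := by
  have hp0 : (p : ℂ) ≠ 0 := by exact_mod_cast hp.out.ne_zero
  have hpr : (0:ℝ) < p := by exact_mod_cast hp.out.pos
  refine ⟨fun h => (1 / p) * ((∑ m ∈ I, (ZMod.stdAddChar (-(h * m)) : ℂ)) *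
    (∑ n ∈ J, (ZMod.stdAddChar (-(h * n)) : ℂ))), fun k => ?_, ?_⟩
  · have h1 : ∀ h : ZMod p, (1 / (p:ℂ)) * ((∑ m ∈ I, (ZMod.stdAddChar (-(h * m)) : ℂ)) *
      (∑ n ∈ J, (ZMod.stdAddChar (-(h * n)) : ℂ))) * ZMod.stdAddChar (h * k) =
        ∑ m ∈ I, ∑ n ∈ J, (1 / (p:ℂ)) * ZMod.stdAddChar (h * (k - m - n)) := by
      intro h
      rw [sum_mul_sum, mul_sum, sum_mul]
      refine sum_congr rfl fun m _ => ?_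
      rw [mul_sum, sum_mul]
      refine sum_congr rfl fun n _ => ?_
      rw [mul_assoc, ← AddChar.map_add_eq_mul, ← AddChar.map_add_eq_mul]
      congr 2; ring
    simp_rw [h1]
    rw [sum_comm, conv, card_filter]
    push_cast
    refine sum_congr rfl fun m _ => ?_
    rw [sum_comm]
    simp_rw [← mul_sum, orth, sub_eq_zero]
    rw [sum_ite_eq]
    split_ifs
    · field_simp; norm_num
    · simp
  · simp only [norm_mul]
    rw [← mul_sum]
    have h2 := Real.sum_mul_le_sqrt_mul_sqrt (univ : Finset (ZMod p))
      (fun h => ‖∑ m ∈ I, (ZMod.stdAddChar (-(h * m)) : ℂ)‖) (fun h => ‖∑ m ∈ J, (ZMod.stdAddChar (-(h * m)) : ℂ)‖)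
    simp only [parseval] at h2
    have h3 : ‖(1 / p : ℂ)‖ = 1 / p := by simp
    rw [h3]
    calc _ ≤ 1 / (p:ℝ) * (√(p * I.card) * √(p * J.card)) := by gcongr
      _ = _ := by
        rw [← Real.sqrt_mul (by positivity), show (p:ℝ) * I.card * (p * J.card) = p ^ 2 * (I.card * J.card) by ring,
          Real.sqrt_mul (by positivity), Real.sqrt_sq hpr.le]
        field_simp

lemma sum_conv (I J : Finset (ZMod p)) : ∑ k, (conv p I J k : ℝ) = I.card * J.card := by
  simp_rw [conv, card_filter]
  push_cast
  rw [sum_comm]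
  have : ∀ m ∈ I, ∑ k : ZMod p, (if k - m ∈ J then (1:ℝ) else 0) = J.card := by
    intro m _
    rw [← Equiv.sum_comp (Equiv.addRight m)]
    simp
  rw [sum_congr rfl this, sum_const, nsmul_eq_mul]

/-- image of an integer interval -/
noncomputable def iv (x : ℤ) (a : ℕ) : Finset (ZMod p) := (Ico x (x + a)).image (fun z : ℤ => (z : ZMod p))

lemma iv_card (x : ℤ) (a : ℕ) : (iv p x a).card ≤ a := by
  refine card_image_le.trans ?_
  simp

lemma mem_iv (x : ℤ) (a : ℕ) (k : ZMod p) : k ∈ iv p x a ↔ ∃ z : ℤ, x ≤ z ∧ z < x + a ∧ (z : ZMod p) = k := by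
  simp only [iv, mem_image, mem_Ico, and_assoc]

lemma int_count (x z : ℤ) (a b : ℕ) : ((Ico x (x + a)).filter (fun m => 0 ≤ z - m ∧ z - m < b)).card =
    (min (x + a) (z + 1) - max x (z + 1 - b)).toNat := by
  rw [← Int.card_Ico]
  congr 1
  ext m
  simp only [mem_filter, mem_Ico, lt_min_iff, max_le_iff]
  omega

lemma conv_ge (x z : ℤ) (a b : ℕ) (ha : a ≤ p) : (min (x + a) (z + 1) - max x (z + 1 - b)).toNat ≤
    conv p (iv p x a) (iv p 0 b) (z : ZMod p) := by
  rw [← int_count, conv]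
  refine card_le_card_of_injOn (fun m : ℤ => (m : ZMod p)) ?_ ?_
  · intro m hm
    simp only [coe_filter, Set.mem_ofPred_eq, mem_Ico] at hm
    simp only [coe_filter, Set.mem_ofPred_eq, mem_iv]
    exact ⟨⟨m, hm.1.1, hm.1.2, rfl⟩, z - m, hm.2.1, by omega, by push_cast; rfl⟩
  · intro m hm m' hm' h
    simp only [coe_filter, Set.mem_ofPred_eq, mem_Ico] at hm hm'
    simp only [ZMod.intCast_eq_intCast_iff_dvd_sub] at h
    have := Int.eq_zero_of_abs_lt_dvd h (by rw [abs_lt]; constructor <;> omega)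
    omega

lemma conv_eq (x z : ℤ) (a b : ℕ) (hx : 0 ≤ x) (hab : x + a + b ≤ p + 1) (hz : 0 ≤ z) (hz' : z < p) :
    conv p (iv p x a) (iv p 0 b) (z : ZMod p) = (min (x + a) (z + 1) - max x (z + 1 - b)).toNat := by
  rcases Nat.eq_zero_or_pos b with rfl | hb
  · simp [conv, iv]
    omega
  refine le_antisymm ?_ (conv_ge p x z a b (by omega))
  rw [← int_count, conv]
  have : (iv p x a).filter (fun m => (z : ZMod p) - m ∈ iv p 0 b) ⊆
      ((Ico x (x + a)).filter (fun m => 0 ≤ z - m ∧ z - m < b)).image (fun z : ℤ => (z : ZMod p)) := by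
    intro k hk
    simp only [mem_filter, mem_iv] at hk
    obtain ⟨⟨m, h1, h2, rfl⟩, n, h3, h4, h5⟩ := hk
    simp only [mem_image, mem_filter, mem_Ico]
    refine ⟨m, ⟨⟨h1, h2⟩, ?_⟩, rfl⟩
    have h6 : ((n + m : ℤ) : ZMod p) = (z : ZMod p) := by push_cast; rw [h5]; ring
    rw [ZMod.intCast_eq_intCast_iff_dvd_sub] at h6
    have := Int.eq_zero_of_abs_lt_dvd h6 (by rw [abs_lt]; constructor <;> omega)
    omega
  exact (card_le_card this).trans card_image_le

end
end KW

namespace KW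

section
variable (p : ℕ) [hp : Fact p.Prime]

noncomputable def ind (K : ℕ) (k : ZMod p) : ℝ := if k.val < K then 1 else 0

/-- trapezoid -/
noncomputable def trap (K w : ℕ) (k : ZMod p) : ℝ := (conv p (iv p 0 (K + 1 - w)) (iv p 0 w) k : ℝ) / w

noncomputable def hat (x : ℤ) (w : ℕ) (k : ZMod p) : ℝ := (conv p (iv p x w) (iv p 0 w) k : ℝ) / w

lemma hat_nonneg (x : ℤ) (w : ℕ) (k : ZMod p) : 0 ≤ hat p x w k := by unfold hat; positivity
lemma trap_nonneg (x : ℕ) (w : ℕ) (k : ZMod p) : 0 ≤ trap p x w k := by unfold trap; positivity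

lemma isA_iv (x : ℤ) (a b : ℕ) : IsA p (fun k => (conv p (iv p x a) (iv p 0 b) k : ℝ)) (Real.sqrt (a * b)) := by
  refine (isA_conv p _ _).mono p (Real.sqrt_le_sqrt ?_)
  have h1 : ((iv p x a).card : ℝ) ≤ a := by exact_mod_cast iv_card p x a
  have h2 : ((iv p 0 b).card : ℝ) ≤ b := by exact_mod_cast iv_card p 0 b
  gcongr

lemma sum_iv (x : ℤ) (a b : ℕ) : ∑ k, (conv p (iv p x a) (iv p 0 b) k : ℝ) ≤ a * b := by
  rw [sum_conv]
  have h1 : ((iv p x a).card : ℝ) ≤ a := by exact_mod_cast iv_card p x a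
  have h2 : ((iv p 0 b).card : ℝ) ≤ b := by exact_mod_cast iv_card p 0 b
  gcongr

lemma isA_hat (x : ℤ) (w : ℕ) (hw : 0 < w) : IsA p (hat p x w) 1 := by
  have h := (isA_iv p x w w).smul p (1 / w) (by positivity)
  have hw' : (0:ℝ) < w := by exact_mod_cast hw
  rw [Real.sqrt_mul_self hw'.le, one_div_mul_cancel hw'.ne'] at h
  unfold hat
  convert h using 2
  ring

lemma avg_hat (x : ℤ) (w : ℕ) (hw : 0 < w) : avg p (hat p x w) ≤ w / p := by
  have hw' : (0:ℝ) < w := by exact_mod_cast hw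
  unfold avg hat
  rw [← sum_div]
  gcongr
  rw [div_le_iff₀ hw']
  exact sum_iv p x w w

lemma zrep (k : ZMod p) : k = ((k.val : ℤ) : ZMod p) := by simp

lemma trap_one (K : ℕ) (hK : K ≤ p) : trap p K 1 = ind p K := by
  funext k
  have hk := ZMod.val_lt k
  rw [trap, ind]
  conv_lhs => rw [zrep p k]
  rw [conv_eq p 0 _ _ _ le_rfl (by push_cast; omega) (by omega) (by omega)]
  split_ifs with h
  · rw [Nat.cast_one (R := ℝ), div_one, Nat.cast_eq_one]; omega
  · rw [Nat.cast_one (R := ℝ), div_one, Nat.cast_eq_zero]; omega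

lemma trap_rec (K w : ℕ) (hw : 0 < w) (hwK : 4 * w ≤ K + 1) (hK : K ≤ p) (k : ZMod p) :
    trap p K w k - trap p K (2 * w) k = (1 / 2) * hat p 0 w k + (1 / 2) * hat p (K + 1 - 2 * w : ℤ) w k := by
  have hk := ZMod.val_lt k
  have hw' : (0:ℝ) < w := by exact_mod_cast hw
  rw [trap, trap, hat, hat, zrep p k]
  rw [conv_eq p 0 _ _ _ le_rfl (by push_cast; omega) (by omega) (by omega)]
  rw [conv_eq p 0 _ _ _ le_rfl (by push_cast; omega) (by omega) (by omega)]
  rw [conv_eq p 0 _ _ _ le_rfl (by push_cast; omega) (by omega) (by omega)]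
  rw [conv_eq p _ _ _ _ (by omega) (by push_cast; omega) (by omega) (by omega)]
  generalize ha : (min (0 + ((K + 1 - w : ℕ) : ℤ)) ((k.val : ℤ) + 1) - max 0 ((k.val : ℤ) + 1 - (w : ℕ))).toNat = A
  generalize hb : (min (0 + ((K + 1 - 2 * w : ℕ) : ℤ)) ((k.val : ℤ) + 1) - max 0 ((k.val : ℤ) + 1 - ((2 * w : ℕ) : ℤ))).toNat = B
  generalize hc : (min (0 + (w : ℤ)) ((k.val : ℤ) + 1) - max 0 ((k.val : ℤ) + 1 - (w : ℕ))).toNat = C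
  generalize hd : (min (((K:ℤ) + 1 - 2 * w) + (w : ℤ)) ((k.val : ℤ) + 1) - max ((K:ℤ) + 1 - 2 * w) ((k.val : ℤ) + 1 - (w : ℕ))).toNat = E
  have key : 2 * A = B + C + E := by omega
  have key' : 2 * (A:ℝ) = B + C + E := by exact_mod_cast key
  push_cast
  field_simp
  linarith

lemma trap_tail (K w : ℕ) (hw : 0 < w) (hwK : 2 * w ≤ K + 1) (hK : K ≤ p) (k : ZMod p) :
    trap p K 1 k - trap p K w k ≤ hat p (1 - w) w k + hat p (K - w : ℤ) w k := by
  have hk := ZMod.val_lt k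
  have hw' : (0:ℝ) < w := by exact_mod_cast hw
  rw [trap_one p K hK, ind]
  split_ifs with h
  · rw [trap, hat, hat, zrep p k]
    rw [conv_eq p 0 _ _ _ le_rfl (by push_cast; omega) (by omega) (by omega)]
    have h1 := conv_ge p (1 - w) (k.val : ℤ) w w (by omega)
    have h2 := conv_ge p (K - w) (k.val : ℤ) w w (by omega)
    generalize conv p (iv p (1 - w) w) (iv p 0 w) (((k.val : ℤ) : ZMod p)) = B at *
    generalize conv p (iv p (K - w) w) (iv p 0 w) (((k.val : ℤ) : ZMod p)) = C at *
    generalize ha : (min (0 + ((K + 1 - w : ℕ) : ℤ)) ((k.val : ℤ) + 1) - max 0 ((k.val : ℤ) + 1 - (w : ℕ))).toNat = A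
    have key : w ≤ A + B + C := by omega
    have key' : (w:ℝ) ≤ A + B + C := by exact_mod_cast key
    rw [sub_le_iff_le_add, ← add_div, ← add_div, le_div_iff₀ hw']
    linarith
  · have := trap_nonneg p K w k
    have := hat_nonneg p (1 - w) w k
    have := hat_nonneg p (K - w) w k
    linarith

lemma trap_le_one (K w : ℕ) (hw : 0 < w) (hwK : 2 * w ≤ K + 1) (hK : K ≤ p) (k : ZMod p) :
    trap p K w k ≤ trap p K 1 k := by
  have hk := ZMod.val_lt k
  have hw' : (0:ℝ) < w := by exact_mod_cast hw
  rw [trap_one p K hK, ind, trap, zrep p k]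
  rw [conv_eq p 0 _ _ _ le_rfl (by push_cast; omega) (by omega) (by omega)]
  generalize ha : (min (0 + ((K + 1 - w : ℕ) : ℤ)) ((k.val : ℤ) + 1) - max 0 ((k.val : ℤ) + 1 - (w : ℕ))).toNat = A
  rw [← zrep]
  split_ifs with h
  · rw [div_le_one hw']
    have : A ≤ w := by omega
    exact_mod_cast this
  · have : A = 0 := by omega
    simp [this]

lemma avg_le_one {f : ZMod p → ℝ} (hf : ∀ k, f k ≤ 1) : avg p f ≤ 1 := by
  have hpr : (0:ℝ) < p := by exact_mod_cast hp.out.pos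
  rw [avg, div_le_one hpr]
  calc _ ≤ ∑ k : ZMod p, (1:ℝ) := sum_le_sum fun k _ => hf k
    _ = p := by simp [ZMod.card]

lemma avg_mono {f g : ZMod p → ℝ} (hf : ∀ k, f k ≤ g k) : avg p f ≤ avg p g := by
  unfold avg; gcongr; exact hf _

lemma avg_nonneg {f : ZMod p → ℝ} (hf : ∀ k, 0 ≤ f k) : 0 ≤ avg p f := by
  unfold avg; have := sum_nonneg (s := univ) fun k _ => hf k; positivity

lemma avg_add (f g : ZMod p → ℝ) : avg p (fun k => f k + g k) = avg p f + avg p g := by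
  unfold avg; rw [sum_add_distrib, add_div]

lemma avg_smul (r : ℝ) (f : ZMod p → ℝ) : avg p (fun k => r * f k) = r * avg p f := by
  unfold avg; rw [← mul_sum, mul_div_assoc]

lemma decomp (K : ℕ) (hK : K ≤ p) : ∃ φ Φ Ψ : ℕ → ZMod p → ℝ,
    (∀ i k, 0 ≤ φ i k) ∧ (∀ i k, 0 ≤ Φ i k) ∧ (∀ i k, Φ i k ≤ Ψ i k) ∧
    (∀ I k, ind p K k = ∑ i ∈ range (I + 1), φ i k + Φ I k) ∧
    (∀ i, IsA p (φ i) 2) ∧ (∀ i, IsA p (Ψ i) 2) ∧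
    (∀ i, avg p (φ i) ≤ 2 / 2 ^ i) ∧ (∀ i, avg p (Ψ i) ≤ 2 / 2 ^ i) := by
  have hpr : (0:ℝ) < p := by exact_mod_cast hp.out.pos
  rcases Nat.eq_zero_or_pos K with rfl | hK0
  · refine ⟨fun _ _ => 0, fun _ _ => 0, fun _ _ => 0, by simp, by simp, by simp, by simp [ind],
      fun _ => isA_zero p 2 (by norm_num), fun _ => isA_zero p 2 (by norm_num), ?_, ?_⟩ <;>
    · intro i; simp only [avg, sum_const_zero, zero_div]; positivity
  obtain ⟨a, ha1, ha2⟩ : ∃ a : ℕ, 2 * 2 ^ a ≤ K + 1 ∧ K + 1 < 4 * 2 ^ a := by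
    have h1 := Nat.pow_log_le_self 2 (x := K + 1) (by omega)
    have h2 := Nat.lt_pow_succ_log_self (b := 2) (by norm_num) (K + 1)
    have h3 : 0 < Nat.log 2 (K + 1) := Nat.log_pos (by norm_num) (by omega)
    obtain ⟨a, ha⟩ : ∃ a, Nat.log 2 (K + 1) = a + 1 := ⟨_, (Nat.succ_pred_eq_of_pos h3).symm⟩
    rw [ha] at h1 h2
    refine ⟨a, ?_, ?_⟩
    · rw [pow_succ] at h1; omega
    · rw [Nat.succ_eq_add_one, pow_succ, pow_succ] at h2; omega
  set w : ℕ → ℕ := fun i => 2 ^ (a - i) with hw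
  have hwpos : ∀ i, 0 < w i := fun i => by simp [hw]
  have hwle : ∀ i, 2 * w i ≤ K + 1 := fun i => by
    have : w i ≤ 2 ^ a := Nat.pow_le_pow_right (by norm_num) (by omega)
    omega
  have hwS : ∀ i, i + 1 ≤ a → w i = 2 * w (i + 1) := fun i hi => by
    simp only [hw]; rw [← pow_succ']; congr 1; omega
  have hw1 : ∀ i, a ≤ i → w i = 1 := fun i hi => by
    simp only [hw]; rw [Nat.sub_eq_zero_of_le hi, pow_zero]
  have hwp : ∀ i, i ≤ a → (w i : ℝ) / p ≤ 1 / 2 ^ i := fun i hi => by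
    have h1 : w i * 2 ^ i = 2 ^ a := by simp only [hw]; rw [← pow_add]; congr 1; omega
    have h2 : w i * 2 ^ i ≤ p := by have := Nat.one_le_two_pow (n := a); omega
    have h2' : (w i : ℝ) * 2 ^ i ≤ p := by exact_mod_cast h2
    rw [div_le_div_iff₀ hpr (by positivity)]
    linarith
  set φ : ℕ → ZMod p → ℝ := fun i k => match i with
    | 0 => trap p K (w 0) k
    | i + 1 => trap p K (w (i + 1)) k - trap p K (w i) k with hφ
  have hφS : ∀ i, i + 1 ≤ a → φ (i + 1) = fun k => (1 / 2) * hat p 0 (w (i+1)) k + (1 / 2) * hat p (K + 1 - 2 * w (i+1) : ℤ) (w (i+1)) k := by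
    intro i hi
    funext k
    simp only [hφ]
    rw [hwS i hi, trap_rec p K (w (i+1)) (hwpos _) _ hK]
    have := hwle i; rw [hwS i hi] at this; omega
  have hφ0 : ∀ i, ¬ i + 1 ≤ a → φ (i + 1) = fun k => 0 := by
    intro i hi
    funext k
    simp only [hφ]
    rw [hw1 i (by omega), hw1 (i+1) (by omega), sub_self]
  refine ⟨φ, fun I k => trap p K 1 k - trap p K (w I) k,
    fun I k => if I ≤ a then hat p (1 - w I) (w I) k + hat p (K - w I : ℤ) (w I) k else 0, ?_, ?_, ?_, ?_, ?_, ?_, ?_, ?_⟩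
  · intro i k
    cases i with
    | zero => exact trap_nonneg p _ _ _
    | succ i =>
      by_cases hi : i + 1 ≤ a
      · rw [hφS i hi]
        have := hat_nonneg p 0 (w (i+1)) k
        have := hat_nonneg p (K + 1 - 2 * w (i+1) : ℤ) (w (i+1)) k
        simp only; linarith
      · rw [hφ0 i hi]
  · intro i k
    have := trap_le_one p K (w i) (hwpos i) (hwle i) hK k
    simp only; linarith
  · intro i k
    simp only
    split_ifs with hi
    · exact trap_tail p K (w i) (hwpos i) (hwle i) hK k
    · rw [hw1 i (by omega), sub_self]
  · intro I k
    rw [← trap_one p K hK]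
    have : ∑ i ∈ range (I + 1), φ i k = trap p K (w I) k := by
      induction I with
      | zero => simp [hφ]
      | succ I ih => rw [sum_range_succ, ih]; simp [hφ]
    rw [this]; ring
  · intro i
    cases i with
    | zero =>
      have h := (isA_iv p 0 (K + 1 - w 0) (w 0)).smul p (1 / (w 0)) (by positivity)
      have hw' : (0:ℝ) < w 0 := by exact_mod_cast hwpos 0
      have e : φ 0 = fun k => 1 / (w 0 : ℝ) * (conv p (iv p 0 (K + 1 - w 0)) (iv p 0 (w 0)) k : ℝ) := by
        funext k; simp only [hφ, trap]; ring
      rw [e]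
      refine h.mono p ?_
      rw [one_div, inv_mul_le_iff₀ hw', Real.sqrt_le_left (by positivity)]
      have : K + 1 - w 0 ≤ 4 * w 0 := by simp only [hw, Nat.sub_zero]; omega
      have : ((K + 1 - w 0 : ℕ) : ℝ) ≤ 4 * w 0 := by exact_mod_cast this
      nlinarith
    | succ i =>
      by_cases hi : i + 1 ≤ a
      · rw [hφS i hi]
        refine (IsA.plus p ((isA_hat p _ _ (hwpos _)).smul p (1/2) (by norm_num))
          ((isA_hat p _ _ (hwpos _)).smul p (1/2) (by norm_num))).mono p (by norm_num)
      · rw [hφ0 i hi]; exact isA_zero p 2 (by norm_num)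
  · intro i
    by_cases hi : i ≤ a
    · simp only [hi, if_true]
      exact (IsA.plus p (isA_hat p _ _ (hwpos _)) (isA_hat p _ _ (hwpos _))).mono p (by norm_num)
    · simp only [hi, if_false]; exact isA_zero p 2 (by norm_num)
  · intro i
    cases i with
    | zero =>
      refine (avg_le_one p fun k => ?_).trans (by norm_num)
      refine (trap_le_one p K (w 0) (hwpos 0) (hwle 0) hK k).trans ?_
      rw [trap_one p K hK, ind]; split_ifs <;> norm_num
    | succ i =>
      by_cases hi : i + 1 ≤ a
      · rw [hφS i hi, avg_add, avg_smul, avg_smul]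
        have h1 := avg_hat p 0 (w (i+1)) (hwpos _)
        have h2 := avg_hat p (K + 1 - 2 * w (i+1) : ℤ) (w (i+1)) (hwpos _)
        have h3 := hwp (i+1) hi
        have : (2:ℝ) / 2 ^ (i+1) = 2 * (1 / 2 ^ (i+1)) := by ring
        have : (0:ℝ) < 1 / 2 ^ (i+1) := by positivity
        linarith
      · rw [hφ0 i hi]; simp only [avg, sum_const_zero, zero_div]; positivity
  · intro i
    by_cases hi : i ≤ a
    · simp only [hi, if_true]
      rw [avg_add]
      have h1 := avg_hat p (1 - w i) (w i) (hwpos _)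
      have h2 := avg_hat p (K - w i : ℤ) (w i) (hwpos _)
      have h3 := hwp i hi
      have : (2:ℝ) / 2 ^ i = 2 * (1 / 2 ^ i) := by ring
      linarith
    · simp only [hi, if_false]; simp only [avg, sum_const_zero, zero_div]; positivity

end
end KW

namespace KW

section
variable (p : ℕ) [hp : Fact p.Prime] {s : ℕ}

noncomputable def Pav (f : Fin s → ZMod p → ℝ) : ℝ := (∑ x : ZMod p, ∏ j, f j (x ^ (j.1 + 1))) / p
noncomputable def Vav (f : Fin s → ZMod p → ℝ) : ℝ := ∏ j, avg p (f j)

lemma stdChar_ne_one : (ZMod.stdAddChar : AddChar (ZMod p) ℂ) ≠ 1 := by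
  have h := ZMod.isPrimitive_stdAddChar p
  have := h (a := 1) one_ne_zero
  rwa [AddChar.mulShift_one] at this

lemma char_sum {ι : Type*} (t : Finset ι) (g : ι → ZMod p) :
    (ZMod.stdAddChar (∑ i ∈ t, g i) : ℂ) = ∏ i ∈ t, ZMod.stdAddChar (g i) := by
  classical
  induction t using Finset.induction_on with
  | empty => simp
  | insert a t ha ih => rw [sum_insert ha, prod_insert ha, AddChar.map_add_eq_mul, ih]

lemma pav_vav (f : Fin s → ZMod p → ℝ) (A : Fin s → ℝ) (hA : ∀ j, IsA p (f j) (A j)) :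
    |Pav p f - Vav p f| ≤ (s / Real.sqrt p) * ∏ j, A j := by
  have hpr : (0:ℝ) < p := by exact_mod_cast hp.out.pos
  have hpc : (p:ℂ) ≠ 0 := by exact_mod_cast hp.out.ne_zero
  choose c hc1 hc2 using hA
  have hV : ((Vav p f : ℝ) : ℂ) = ∏ j, c j 0 := by
    rw [Vav]; push_cast
    exact prod_congr rfl fun j _ => avg_eq p (hc1 j)
  set S : (Fin s → ZMod p) → ℂ := fun h => (∑ x : ZMod p, ZMod.stdAddChar (∑ j, h j * x ^ (j.1 + 1))) / p with hS
  have hP : ((Pav p f : ℝ) : ℂ) = ∑ h : Fin s → ZMod p, (∏ j, c j (h j)) * S h := by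
    rw [Pav]; push_cast
    simp_rw [hc1, prod_univ_sum, Fintype.piFinset_univ, prod_mul_distrib]
    rw [sum_comm, sum_div]
    refine sum_congr rfl fun h _ => ?_
    rw [hS]
    simp only
    rw [← mul_sum, mul_div_assoc]
    simp_rw [char_sum]
  have hS0 : S 0 = 1 := by simp [hS, ZMod.card, hpc]
  have hSb : ∀ h, h ≠ 0 → ‖S h‖ ≤ s / Real.sqrt p := by
    intro h hh
    rw [hS]; simp only
    rw [norm_div, Complex.norm_natCast, div_le_div_iff₀ hpr (Real.sqrt_pos.2 hpr)]
    have := weil' p ZMod.stdAddChar s h hh (stdChar_ne_one p)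
    calc _ ≤ (s * Real.sqrt p) * Real.sqrt p := by gcongr
      _ = _ := by rw [mul_assoc, Real.mul_self_sqrt hpr.le]
  have hdiff : ((Pav p f - Vav p f : ℝ) : ℂ) = ∑ h ∈ univ.erase (0 : Fin s → ZMod p), (∏ j, c j (h j)) * S h := by
    push_cast
    rw [hP, hV, ← Finset.add_sum_erase univ _ (mem_univ 0), hS0]
    simp
  rw [← Real.norm_eq_abs, ← Complex.norm_real, hdiff]
  calc _ ≤ ∑ h ∈ univ.erase (0 : Fin s → ZMod p), (∏ j, ‖c j (h j)‖) * (s / Real.sqrt p) := by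
        refine (norm_sum_le _ _).trans (sum_le_sum fun h hh => ?_)
        rw [norm_mul, norm_prod]
        have := hSb h (ne_of_mem_erase hh)
        gcongr
    _ ≤ ∑ h : Fin s → ZMod p, (∏ j, ‖c j (h j)‖) * (s / Real.sqrt p) := by
        refine sum_le_sum_of_subset_of_nonneg (erase_subset _ _) fun h _ _ => ?_
        have : 0 ≤ ∏ j, ‖c j (h j)‖ := prod_nonneg fun _ _ => norm_nonneg _
        positivity
    _ = (s / Real.sqrt p) * ∏ j, ∑ h, ‖c j h‖ := by
        rw [prod_univ_sum, Fintype.piFinset_univ, ← sum_mul, mul_comm]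
    _ ≤ _ := by
        gcongr with j _
        exact hc2 j

lemma Pav_update (f : Fin s → ZMod p → ℝ) (j0 : Fin s) (g : ZMod p → ℝ) :
    Pav p (Function.update f j0 g) =
      (∑ x : ZMod p, g (x ^ (j0.1 + 1)) * ∏ j ∈ univ.erase j0, f j (x ^ (j.1 + 1))) / p := by
  rw [Pav]
  congr 1
  refine sum_congr rfl fun x _ => ?_
  rw [← Finset.mul_prod_erase univ _ (mem_univ j0)]
  congr 1
  · simp
  · refine prod_congr rfl fun j hj => ?_
    rw [Function.update_of_ne (ne_of_mem_erase hj)]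

lemma Vav_update (f : Fin s → ZMod p → ℝ) (j0 : Fin s) (g : ZMod p → ℝ) :
    Vav p (Function.update f j0 g) = avg p g * ∏ j ∈ univ.erase j0, avg p (f j) := by
  rw [Vav, ← Finset.mul_prod_erase univ _ (mem_univ j0)]
  congr 1
  · simp
  · refine prod_congr rfl fun j hj => ?_
    rw [Function.update_of_ne (ne_of_mem_erase hj)]

lemma split_diff (f : Fin s → ZMod p → ℝ) (j0 : Fin s) (n : ℕ) (φ : ℕ → ZMod p → ℝ) (Φ : ZMod p → ℝ)
    (h : ∀ k, f j0 k = ∑ i ∈ range n, φ i k + Φ k) :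
    Pav p f - Vav p f = ∑ i ∈ range n, (Pav p (Function.update f j0 (φ i)) - Vav p (Function.update f j0 (φ i)))
      + (Pav p (Function.update f j0 Φ) - Vav p (Function.update f j0 Φ)) := by
  have hP : Pav p f = ∑ i ∈ range n, Pav p (Function.update f j0 (φ i)) + Pav p (Function.update f j0 Φ) := by
    conv_lhs => rw [← Function.update_eq_self j0 f]
    simp only [Pav_update]
    rw [← sum_div, ← add_div, sum_comm, ← sum_add_distrib]
    congr 1
    refine sum_congr rfl fun x _ => ?_
    rw [h, add_mul, sum_mul]
  have hV : Vav p f = ∑ i ∈ range n, Vav p (Function.update f j0 (φ i)) + Vav p (Function.update f j0 Φ) := by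
    conv_lhs => rw [← Function.update_eq_self j0 f]
    simp only [Vav_update]
    rw [← sum_mul, ← add_mul]
    congr 1
    unfold avg
    rw [← sum_div, ← add_div, sum_comm, ← sum_add_distrib]
    congr 1
    exact sum_congr rfl fun x _ => h x
  rw [hP, hV, sum_sub_distrib]; ring

lemma Pav_mono {f g : Fin s → ZMod p → ℝ} (h0 : ∀ j k, 0 ≤ f j k) (h : ∀ j k, f j k ≤ g j k) :
    Pav p f ≤ Pav p g := by
  unfold Pav
  gcongr with x _ j _
  · exact fun j _ => h0 j _
  · exact h j _

lemma Vav_mono {f g : Fin s → ZMod p → ℝ} (h0 : ∀ j k, 0 ≤ f j k) (h : ∀ j k, f j k ≤ g j k) :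
    Vav p f ≤ Vav p g := by
  unfold Vav
  gcongr with j _
  · exact fun j _ => avg_nonneg p (h0 j)
  · exact avg_mono p (h j)

lemma Pav_nonneg {f : Fin s → ZMod p → ℝ} (h0 : ∀ j k, 0 ≤ f j k) : 0 ≤ Pav p f := by
  unfold Pav
  have : 0 ≤ ∑ x : ZMod p, ∏ j, f j (x ^ (j.1 + 1)) := sum_nonneg fun x _ => prod_nonneg fun j _ => h0 j _
  positivity

lemma Vav_nonneg {f : Fin s → ZMod p → ℝ} (h0 : ∀ j k, 0 ≤ f j k) : 0 ≤ Vav p f :=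
  prod_nonneg fun j _ => avg_nonneg p (h0 j)

lemma geom_bound (q : ℝ) (hq : 1 < q) (M : ℕ) : ∑ i ∈ range (M + 1), q ^ (M - i) ≤ q / (q - 1) * q ^ M := by
  have h0 : 0 < q - 1 := by linarith
  have h1 : ∑ i ∈ range (M + 1), q ^ (M - i) = ∑ i ∈ range (M + 1), q ^ i := by
    rw [← sum_range_reflect]
    refine sum_congr rfl fun i hi => ?_
    congr 1; have := mem_range.1 hi; omega
  rw [h1, geom_sum_eq hq.ne', div_mul_eq_mul_div]
  gcongr
  rw [pow_succ]; linarith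

theorem main_ind (q : ℝ) (hq : 1 < q) (hs : 1 ≤ s) (w : Finset (Fin s)) : ∀ (M : ℕ) (f : Fin s → ZMod p → ℝ) (a : Fin s → ℝ),
    (∀ j k, 0 ≤ f j k) → (∀ j ∈ w, ∃ K ≤ p, f j = ind p K) → (∀ j, j ∉ w → IsA p (f j) (a j)) →
    (∏ j ∈ wᶜ, avg p (f j) ≤ (∏ j ∈ wᶜ, a j) * (s / Real.sqrt p) * 2 ^ M) →
    |Pav p f - Vav p f| ≤ (∏ j ∈ wᶜ, a j) * (s / Real.sqrt p) * (2 * (q / (q - 1) + 2)) ^ w.card * q ^ M := by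
  have hpr : (0:ℝ) < p := by exact_mod_cast hp.out.pos
  set ε : ℝ := s / Real.sqrt p with hε
  have hε0 : 0 < ε := div_pos (by exact_mod_cast hs) (Real.sqrt_pos.2 hpr)
  have hq1 : 0 < q - 1 := by linarith
  set D : ℝ := 2 * (q / (q - 1) + 2) with hD
  have hqq : 0 < q / (q - 1) := by positivity
  have hD0 : 1 ≤ D := by rw [hD]; linarith
  induction w using Finset.induction_on with
  | empty =>
    intro M f a h0 _ hA _
    have := pav_vav p f a (fun j => hA j (by simp))
    have hpos : 0 ≤ ∏ j, a j := prod_nonneg fun j _ => (hA j (by simp)).nonneg p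
    simp only [compl_empty, card_empty, pow_zero, mul_one]
    rw [mul_comm] at this
    exact this.trans (le_mul_of_one_le_right (by positivity) (one_le_pow₀ hq.le))
  | insert j0 w hj0 ih =>
    intro M f a h0 hind hA hprod
    obtain ⟨K, hK, hfK⟩ := hind j0 (mem_insert_self _ _)
    obtain ⟨φ, Φ, Ψ, hφ0, hΦ0, hΦΨ, hdec, hφA, hΨA, hφavg, hΨavg⟩ := decomp p K hK
    have hcompl : wᶜ = insert j0 ((insert j0 w)ᶜ) := by
      ext j; simp only [mem_compl, mem_insert]
      by_cases h : j = j0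
      · subst h; simp [hj0]
      · simp [h]
    have hnot : j0 ∉ (insert j0 w)ᶜ := by simp
    set A : ℝ := ∏ j ∈ (insert j0 w)ᶜ, a j with hAdef
    have hA0 : 0 ≤ A := prod_nonneg fun j hj => (hA j (mem_compl.1 hj)).nonneg p
    have hne : ∀ j ∈ (insert j0 w)ᶜ, j ≠ j0 := fun j hj h => hnot (h ▸ hj)
    have hA' : ∏ j ∈ wᶜ, Function.update a j0 2 j = 2 * A := by
      rw [hcompl, prod_insert hnot]
      congr 1
      · simp
      · exact prod_congr rfl fun j hj => Function.update_of_ne (hne j hj) _ _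
    have havg' : ∀ g : ZMod p → ℝ, ∏ j ∈ wᶜ, avg p (Function.update f j0 g j) =
        avg p g * ∏ j ∈ (insert j0 w)ᶜ, avg p (f j) := by
      intro g
      rw [hcompl, prod_insert hnot]
      congr 1
      · simp
      · exact prod_congr rfl fun j hj => by rw [Function.update_of_ne (hne j hj)]
    have hprod0 : 0 ≤ ∏ j ∈ (insert j0 w)ᶜ, avg p (f j) := prod_nonneg fun j _ => avg_nonneg p (h0 j)
    have hup0 : ∀ g : ZMod p → ℝ, (∀ k, 0 ≤ g k) → ∀ j k, 0 ≤ Function.update f j0 g j k := by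
      intro g hg j k
      by_cases h : j = j0
      · subst h; simpa using hg k
      · rw [Function.update_of_ne h]; exact h0 j k
    have hupA : ∀ g : ZMod p → ℝ, IsA p g 2 → ∀ j, j ∉ w → IsA p (Function.update f j0 g j) (Function.update a j0 2 j) := by
      intro g hg j hj
      by_cases h : j = j0
      · subst h; simpa using hg
      · rw [Function.update_of_ne h, Function.update_of_ne h]
        exact hA j (by simp [h, hj])
    have hterm : ∀ i ∈ range (M + 1), |Pav p (Function.update f j0 (φ i)) - Vav p (Function.update f j0 (φ i))| ≤
        2 * A * ε * D ^ w.card * q ^ (M - i) := by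
      intro i hi
      have hi : i ≤ M := by have := mem_range.1 hi; omega
      have := ih (M - i) (Function.update f j0 (φ i)) (Function.update a j0 2) (hup0 _ (hφ0 i)) (by
        intro j hj
        have hjne : j ≠ j0 := fun h => hj0 (h ▸ hj)
        rw [Function.update_of_ne hjne]
        exact hind j (mem_insert_of_mem hj)) (hupA _ (hφA i)) (by
        rw [hA', havg']
        have h2 : (2:ℝ) ^ M = 2 ^ (M - i) * 2 ^ i := by rw [← pow_add]; congr 1; omega
        calc _ ≤ 2 / 2 ^ i * (A * ε * 2 ^ M) := by
              refine mul_le_mul (hφavg i) hprod hprod0 (by positivity)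
          _ = _ := by rw [h2]; field_simp)
      rwa [hA'] at this
    set G : Fin s → ZMod p → ℝ := fun j => if j ∈ w then (fun _ => 1) else Function.update f j0 (Ψ M) j with hG
    set aG : Fin s → ℝ := fun j => if j ∈ w then 1 else Function.update a j0 2 j with haG
    have hGA : ∀ j, IsA p (G j) (aG j) := by
      intro j
      by_cases h : j ∈ w
      · simp only [hG, haG, h, if_true]; exact isA_one p
      · simp only [hG, haG, h, if_false]; exact hupA _ (hΨA M) j h
    have hGprod : ∏ j, aG j = 2 * A := by
      rw [← prod_mul_prod_compl w, ← hA']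
      rw [prod_eq_one (s := w) (fun j hj => by simp [haG, hj]), one_mul]
      exact prod_congr rfl fun j hj => by simp [haG, mem_compl.1 hj]
    have hGV : Vav p G ≤ 2 * A * ε := by
      have h1 : avg p (fun _ => (1:ℝ)) = 1 := by
        have : (p:ℝ) ≠ 0 := hpr.ne'
        simp [avg, ZMod.card, this]
      have : Vav p G = avg p (Ψ M) * ∏ j ∈ (insert j0 w)ᶜ, avg p (f j) := by
        rw [Vav, ← prod_mul_prod_compl w, ← havg']
        rw [prod_eq_one (s := w) (fun j hj => by simp [hG, hj, h1]), one_mul]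
        exact prod_congr rfl fun j hj => by simp [hG, mem_compl.1 hj]
      rw [this]
      calc _ ≤ 2 / 2 ^ M * (A * ε * 2 ^ M) := mul_le_mul (hΨavg M) hprod hprod0 (by positivity)
        _ = _ := by field_simp
    have hGP : Pav p G ≤ 4 * A * ε := by
      have h1 := (abs_le.1 (pav_vav p G aG hGA)).2
      rw [hGprod] at h1
      linarith
    have hle : ∀ j k, Function.update f j0 (Φ M) j k ≤ G j k := by
      intro j k
      by_cases h : j ∈ w
      · have hjne : j ≠ j0 := fun h' => hj0 (h' ▸ h)
        obtain ⟨K', _, hK'⟩ := hind j (mem_insert_of_mem h)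
        simp only [hG, h, if_true]
        rw [Function.update_of_ne hjne, hK', ind]
        split_ifs <;> norm_num
      · simp only [hG, h, if_false]
        by_cases h' : j = j0
        · subst h'; simpa using hΦΨ M k
        · rw [Function.update_of_ne h', Function.update_of_ne h']
    have hT0 := hup0 _ (hΦ0 M)
    have htail : |Pav p (Function.update f j0 (Φ M)) - Vav p (Function.update f j0 (Φ M))| ≤ 4 * A * ε := by
      have h1 := Pav_mono p hT0 hle
      have h2 := Vav_mono p hT0 hle
      have h3 := Pav_nonneg p hT0
      have h4 := Vav_nonneg p hT0
      have h5 : 0 ≤ A * ε := by positivity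
      rw [abs_le]; constructor <;> linarith
    rw [split_diff p f j0 (M + 1) φ (Φ M) (fun k => by rw [hfK]; exact hdec M k)]
    have hDw : 1 ≤ D ^ w.card := one_le_pow₀ hD0
    have hqM : 1 ≤ q ^ M := one_le_pow₀ hq.le
    calc _ ≤ ∑ i ∈ range (M + 1), 2 * A * ε * D ^ w.card * q ^ (M - i) + 4 * A * ε := by
          refine (abs_add_le _ _).trans (add_le_add ((abs_sum_le_sum_abs _ _).trans (sum_le_sum hterm)) htail)
      _ ≤ 2 * A * ε * D ^ w.card * (q / (q - 1) * q ^ M) + 4 * A * ε * (D ^ w.card * q ^ M) := by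
          rw [← mul_sum]
          have := geom_bound q hq M
          refine add_le_add ?_ ?_
          · gcongr
          · exact le_mul_of_one_le_right (by positivity) (one_le_mul_of_one_le_of_one_le hDw hqM)
      _ = _ := by rw [card_insert_of_notMem hj0, pow_succ, hD]; ring
end
end KW

namespace KW

section
variable (p : ℕ) [hp : Fact p.Prime] {s : ℕ}

lemma sum_zmod_fin (g : ZMod p → ℝ) : ∑ x : ZMod p, g x = ∑ n : Fin p, g ((n.1 : ℕ) : ZMod p) := by
  have hp0 : 0 < p := hp.out.pos
  symm
  refine Finset.sum_bij' (fun n _ => ((n.1 : ℕ) : ZMod p)) (fun x _ => (⟨x.val, ZMod.val_lt x⟩ : Fin p))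
    (by simp) (by simp) ?_ ?_ (by simp)
  · intro n _
    ext
    simp [ZMod.val_natCast, Nat.mod_eq_of_lt n.2]
  · intro x _
    simp

lemma avg_ind (K : ℕ) (hK : K ≤ p) : avg p (ind p K) = K / p := by
  rw [avg, sum_zmod_fin]
  congr 1
  have : ∀ n : Fin p, ind p K ((n.1 : ℕ) : ZMod p) = if n.1 < K then 1 else 0 := by
    intro n
    simp [ind, ZMod.val_natCast, Nat.mod_eq_of_lt n.2]
  simp only [this]
  rw [Fin.sum_univ_eq_sum_range (fun n => if n < K then (1:ℝ) else 0) p]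
  rw [← sum_filter, sum_const, nsmul_eq_mul, mul_one]
  congr 1
  have : (range p).filter (fun n => n < K) = range K := by
    ext n; simp; omega
  rw [this, card_range]

lemma avg_const_one : avg p (fun _ => (1:ℝ)) = 1 := by
  have : (p:ℝ) ≠ 0 := by exact_mod_cast hp.out.ne_zero
  simp [avg, ZMod.card, this]

lemma fract_lt (n m : ℕ) (z : ℝ) :
    Int.fract ((n : ℝ) ^ m / p) < z ↔ ((n : ZMod p) ^ m).val < ⌈z * p⌉₊ := by
  have hp0 : (0:ℝ) < p := by exact_mod_cast hp.out.pos
  have h1 : ((n : ZMod p) ^ m).val = n ^ m % p := by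
    rw [← Nat.cast_pow, ZMod.val_natCast]
  have h2 : Int.fract ((n : ℝ) ^ m / p) = ((n ^ m % p : ℕ) : ℝ) / p := by
    have := Int.fract_div_natCast_eq_div_natCast_mod (k := ℝ) (m := n ^ m) (n := p)
    rw [← this]; push_cast; rfl
  rw [h1, h2, Nat.lt_ceil, div_lt_iff₀ hp0]

/-- The test functions. -/
noncomputable def tf (u : Finset (Fin s)) (z : Fin s → ℝ) (j : Fin s) : ZMod p → ℝ :=
  if j ∈ u then ind p ⌈z j * p⌉₊ else fun _ => 1

lemma localDisc_eq (u : Finset (Fin s)) (z : Fin s → ℝ) :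
    localDisc (korobovP p s) (projPoint u z) = Pav p (tf p u z) - ∏ j ∈ u, z j := by
  rw [localDisc, Pav]
  congr 1
  · congr 1
    rw [sum_zmod_fin, card_filter]
    push_cast
    refine sum_congr rfl fun n _ => ?_
    have : ∀ j : Fin s, tf p u z j (((n.1 : ℕ) : ZMod p) ^ (j.1 + 1)) =
        if korobovP p s n j < projPoint u z j then 1 else 0 := by
      intro j
      by_cases hj : j ∈ u
      · simp only [tf, projPoint, hj, if_true, korobovP, fract_lt, ind]
      · simp only [tf, projPoint, hj, if_false, korobovP, Int.fract_lt_one, if_true]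
    simp only [this]
    rw [prod_ite_zero]
    simp
  · simp only [projPoint]
    rw [prod_ite_mem, univ_inter]

lemma prod_diff (u : Finset (Fin s)) (a b : Fin s → ℝ) (e : ℝ) (ha : ∀ j, 0 ≤ a j ∧ a j ≤ 1)
    (hb : ∀ j, 0 ≤ b j ∧ b j ≤ 1) (hab : ∀ j, |a j - b j| ≤ e) :
    |∏ j ∈ u, a j - ∏ j ∈ u, b j| ≤ u.card * e := by
  induction u using Finset.induction_on with
  | empty => simp
  | insert i u hi ih =>
    rw [prod_insert hi, prod_insert hi, card_insert_of_notMem hi]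
    have h1 : a i * ∏ j ∈ u, a j - b i * ∏ j ∈ u, b j =
        a i * (∏ j ∈ u, a j - ∏ j ∈ u, b j) + (a i - b i) * ∏ j ∈ u, b j := by ring
    have h2 : 0 ≤ ∏ j ∈ u, b j := prod_nonneg fun j _ => (hb j).1
    have h3 : ∏ j ∈ u, b j ≤ 1 := prod_le_one (fun j _ => (hb j).1) fun j _ => (hb j).2
    rw [h1]
    refine (abs_add_le _ _).trans ?_
    rw [abs_mul, abs_mul, abs_of_nonneg (ha i).1, abs_of_nonneg h2]
    have h4 := mul_le_mul_of_nonneg_right (ha i).2 (abs_nonneg (∏ j ∈ u, a j - ∏ j ∈ u, b j))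
    have h5 := mul_le_mul_of_nonneg_left h3 (abs_nonneg (a i - b i))
    push_cast
    have := hab i
    linarith

lemma localDisc_le (δ : ℝ) (hδ : 0 < δ) (hs : 1 ≤ s) (u : Finset (Fin s)) (z : Fin s → ℝ)
    (hz : ∀ j, z j ∈ Set.Icc (0:ℝ) 1) :
    |localDisc (korobovP p s) (projPoint u z)| ≤
      (2 * ((2:ℝ) ^ δ / ((2:ℝ) ^ δ - 1) + 2)) ^ u.card * (1 + (2:ℝ) ^ δ) * s *
        (p : ℝ) ^ (-(1 / 2 - δ) : ℝ) := by
  set q : ℝ := (2:ℝ) ^ δ with hqdef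
  have hq : 1 < q := Real.one_lt_rpow one_lt_two hδ
  set D : ℝ := 2 * (q / (q - 1) + 2) with hD
  have hD1 : 1 ≤ D := by
    have : 0 < q / (q - 1) := div_pos (by linarith) (by linarith)
    linarith
  have hp1 : (1:ℝ) ≤ p := by exact_mod_cast hp.out.one_le
  have hp0 : (0:ℝ) < p := by linarith
  have hs1 : (1:ℝ) ≤ s := by exact_mod_cast hs
  have hsq : 1 ≤ √(p:ℝ) := Real.one_le_sqrt.2 hp1
  have hsq0 : 0 < √(p:ℝ) := by linarith
  obtain ⟨M0, hM0, hM1⟩ := exists_nat_pow_near hsq one_lt_two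
  set M := M0 + 1
  have hM2 : (2:ℝ) ^ M ≤ 2 * √p := by rw [pow_succ]; linarith
  have hK : ∀ j, ⌈z j * p⌉₊ ≤ p := fun j => by
    rw [Nat.ceil_le]
    have := mul_le_mul_of_nonneg_right (hz j).2 hp0.le
    linarith
  -- volume term
  have hV : Vav p (tf p u z) = ∏ j ∈ u, ((⌈z j * p⌉₊ : ℝ) / p) := by
    rw [Vav, ← prod_mul_prod_compl u, prod_eq_one (s := uᶜ), mul_one]
    · exact prod_congr rfl fun j hj => by rw [tf, if_pos hj, avg_ind p _ (hK j)]
    · intro j hj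
      rw [tf, if_neg (mem_compl.1 hj), avg_const_one]
  have hvol : |Vav p (tf p u z) - ∏ j ∈ u, z j| ≤ u.card * (1 / p) := by
    rw [hV]
    refine prod_diff u (fun j => (⌈z j * p⌉₊ : ℝ) / p) z _ (fun j => ⟨by positivity, ?_⟩) (fun j => hz j) ?_
    · rw [div_le_one hp0]; exact_mod_cast hK j
    · intro j
      have h1 := Nat.le_ceil (z j * p)
      have h2 := Nat.ceil_lt_add_one (mul_nonneg (hz j).1 hp0.le)
      have h3 : (⌈z j * p⌉₊ : ℝ) / p - z j = (⌈z j * p⌉₊ - z j * p) / p := by field_simp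
      rw [h3, abs_div, abs_of_pos hp0]
      gcongr
      rw [abs_le]; constructor <;> linarith
  -- main term
  have hmain := main_ind p q hq hs u M (tf p u z) (fun _ => 1)
    (fun j k => by
      unfold tf ind
      split_ifs
      · dsimp only
        split_ifs <;> norm_num
      · norm_num)
    (fun j hj => ⟨_, hK j, by rw [tf, if_pos hj]⟩)
    (fun j hj => by rw [tf, if_neg hj]; exact isA_one p)
    (by
      rw [prod_eq_one fun j hj => by rw [tf, if_neg (mem_compl.1 hj), avg_const_one]]
      rw [prod_const_one, one_mul]
      rw [div_mul_eq_mul_div, le_div_iff₀ hsq0, one_mul]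
      nlinarith [hM1.le])
  rw [prod_const_one, one_mul, ← hD] at hmain
  have hqM : q ^ M ≤ q * (p:ℝ) ^ (δ / 2) := by
    have : q ^ M = ((2:ℝ) ^ M) ^ δ := by
      rw [hqdef, ← Real.rpow_natCast, ← Real.rpow_mul (by norm_num), mul_comm,
        Real.rpow_mul (by norm_num), Real.rpow_natCast]
    rw [this]
    refine (Real.rpow_le_rpow (by positivity) hM2 hδ.le).trans ?_
    rw [Real.mul_rpow (by norm_num) hsq0.le, Real.sqrt_eq_rpow, ← Real.rpow_mul hp0.le]
    rw [show 1 / 2 * δ = δ / 2 by ring]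
  set R : ℝ := (p:ℝ) ^ (-(1 / 2 - δ) : ℝ) with hR
  have hR1 : 1 / √(p:ℝ) * (p:ℝ) ^ (δ / 2) ≤ R := by
    rw [Real.sqrt_eq_rpow, one_div, ← Real.rpow_neg hp0.le, ← Real.rpow_add hp0]
    exact Real.rpow_le_rpow_of_exponent_le hp1 (by linarith)
  have hR2 : 1 / (p:ℝ) ≤ R := by
    rw [one_div, ← Real.rpow_neg_one]
    exact Real.rpow_le_rpow_of_exponent_le hp1 (by linarith)
  have hR0 : 0 < R := by positivity
  have hu : (u.card : ℝ) ≤ s := by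
    have := card_le_univ u
    rw [Fintype.card_fin] at this
    exact_mod_cast this
  have hDu : 1 ≤ D ^ u.card := one_le_pow₀ hD1
  rw [localDisc_eq]
  have hsplit : Pav p (tf p u z) - ∏ j ∈ u, z j =
      (Pav p (tf p u z) - Vav p (tf p u z)) + (Vav p (tf p u z) - ∏ j ∈ u, z j) := by ring
  rw [hsplit]
  have hA : |Pav p (tf p u z) - Vav p (tf p u z)| ≤ D ^ u.card * q * s * R := by
    refine hmain.trans ?_
    calc s / √(p:ℝ) * D ^ u.card * q ^ M ≤ s / √(p:ℝ) * D ^ u.card * (q * (p:ℝ) ^ (δ / 2)) := by gcongr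
      _ = D ^ u.card * q * s * (1 / √(p:ℝ) * (p:ℝ) ^ (δ / 2)) := by ring
      _ ≤ _ := by gcongr
  have hB : |Vav p (tf p u z) - ∏ j ∈ u, z j| ≤ D ^ u.card * s * R := by
    refine hvol.trans ?_
    calc (u.card : ℝ) * (1 / p) ≤ s * R := by gcongr
      _ ≤ D ^ u.card * (s * R) := le_mul_of_one_le_left (by positivity) hDu
      _ = _ := by ring
  refine (abs_add_le _ _).trans ((add_le_add hA hB).trans (le_of_eq ?_))
  ring
end

lemma weight_bound (γ : ℕ → ℝ) (hγ : ∀ j, 1 ≤ j → 0 ≤ γ j)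
    (hsum : ∃ τ : ℝ, 0 < τ ∧ Summable fun j => γ (j + 1) ^ τ) (D : ℝ) (hD : 1 ≤ D) :
    ∃ G : ℝ, 0 < G ∧ ∀ (s : ℕ) (u : Finset (Fin s)), weightOf γ u * D ^ u.card ≤ G := by
  obtain ⟨τ, hτ, hs⟩ := hsum
  have ht := hs.tendsto_atTop_zero
  have hD0 : 0 < D := by linarith
  have hpos : (0:ℝ) < (1 / D) ^ τ := by positivity
  obtain ⟨N, hN⟩ := Filter.eventually_atTop.1 (ht.eventually (gt_mem_nhds hpos))
  set m : ℕ → ℝ := fun j => max 1 (γ (j + 1) * D) with hm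
  have hm1 : ∀ j, 1 ≤ m j := fun j => le_max_left _ _
  have hmN : ∀ j, N ≤ j → m j = 1 := by
    intro j hj
    have h1 : γ (j + 1) < 1 / D :=
      (Real.rpow_lt_rpow_iff (hγ _ (by omega)) (by positivity) hτ).1 (hN j hj)
    have h2 : γ (j + 1) * D < 1 := by rwa [lt_div_iff₀ hD0] at h1
    exact max_eq_left h2.le
  refine ⟨∏ j ∈ range N, m j, prod_pos fun j _ => by linarith [hm1 j], fun s u => ?_⟩
  rw [weightOf, ← prod_const, ← prod_mul_distrib]
  calc ∏ j ∈ u, (γ (j.1 + 1) * D) ≤ ∏ j ∈ u, m j.1 := by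
        refine prod_le_prod (fun j _ => mul_nonneg (hγ _ (by omega)) hD0.le) fun j _ => le_max_right _ _
    _ = ∏ j ∈ u.map Fin.valEmbedding, m j := by rw [prod_map]; rfl
    _ ≤ ∏ j ∈ range N ∪ u.map Fin.valEmbedding, m j := by
        rw [← prod_sdiff (subset_union_right (s₁ := range N) (s₂ := u.map Fin.valEmbedding))]
        refine le_mul_of_one_le_left (prod_nonneg fun j _ => by linarith [hm1 j]) ?_
        exact Finset.one_le_prod fun j _ => hm1 j
    _ = ∏ j ∈ range N, m j := by
        symm
        refine prod_subset subset_union_left fun j _ hj => hmN j ?_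
        simpa using hj
end KW

/-- for non-increasing nonnegative weights with `∑_j γ_j^τ < ∞` for some
`τ > 0`, and any `δ > 0`, `D*_γ(P_{p,s}) ≤ C s p^{−(1/2−δ)}` with `C` independent of
the prime `p` and of `s`. -/
theorem wStarDisc_korobovP_le_of_tau (γ : ℕ → ℝ) (hγ : ∀ j, 1 ≤ j → 0 ≤ γ j)
    (hdec : ∀ j, 1 ≤ j → γ (j + 1) ≤ γ j)
    (hsum : ∃ τ : ℝ, 0 < τ ∧ Summable fun j => γ (j + 1) ^ τ) (δ : ℝ) (hδ : 0 < δ) :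
    ∃ C : ℝ, 0 < C ∧ ∀ p s : ℕ, p.Prime → 1 ≤ s →
      wStarDisc γ (korobovP p s) ≤ C * (s : ℝ) * (p : ℝ) ^ (-(1 / 2 - δ) : ℝ) := by
  have hq : 1 < (2:ℝ) ^ δ := Real.one_lt_rpow one_lt_two hδ
  have hD1 : 1 ≤ 2 * ((2:ℝ) ^ δ / ((2:ℝ) ^ δ - 1) + 2) := by
    have : 0 < (2:ℝ) ^ δ / ((2:ℝ) ^ δ - 1) := div_pos (by linarith) (by linarith)
    linarith
  obtain ⟨G, hG, hGb⟩ := KW.weight_bound γ hγ hsum _ hD1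
  refine ⟨G * (1 + (2:ℝ) ^ δ), by positivity, fun p s hp hs => ?_⟩
  haveI : Fact p.Prime := ⟨hp⟩
  refine Real.sSup_le ?_ (by positivity)
  rintro d ⟨z, hz, u, -, rfl⟩
  have hw : 0 ≤ weightOf γ u := prod_nonneg fun j _ => hγ _ (by omega)
  have h1 := mul_le_mul_of_nonneg_left (KW.localDisc_le p δ hδ hs u z hz) hw
  refine h1.trans ?_
  have h2 := mul_le_mul_of_nonneg_right (hGb s u)
    (show 0 ≤ (1 + (2:ℝ) ^ δ) * s * (p : ℝ) ^ (-(1 / 2 - δ) : ℝ) by positivity)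
  refine le_trans (le_of_eq ?_) (h2.trans (le_of_eq ?_)) <;> ring
end

section
/- There exists a constant C > 0 and a sequence (u_n)_{n≥1} of real numbers in [0,1] such that for all s ∈ ℕ and all N ∈ ℕ with N ≥ 2, the point set {u^{(s)}_1, …, u^{(s)}_N} ⊂ [0,1]^s, where u^{(s)}_n = (u_{(n−1)s+1}, u_{(n−1)s+2}, …, u_{ns}), has star-discrepancy at most C·√(s·log N)/√N. -/
open Finset

/-- Star-discrepancy `D*(x) = sup_{t ∈ [0,1]^s} |Δ(t)|`. -/
noncomputable def starDisc {N s : ℕ} (x : Fin N → Fin s → ℝ) : ℝ :=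
  sSup {d : ℝ | ∃ t : Fin s → ℝ, (∀ j, t j ∈ Set.Icc (0:ℝ) 1) ∧ d = |localDisc x t|}

open MeasureTheory ProbabilityTheory unitInterval

lemma prod_diff_le {s : ℕ} (a b : Fin s → ℝ) (ha : ∀ j, a j ∈ Set.Icc (0:ℝ) 1)
    (hb : ∀ j, b j ∈ Set.Icc (0:ℝ) 1) (S : Finset (Fin s)) :
    ∏ j ∈ S, b j - ∏ j ∈ S, a j ≤ ∑ j ∈ S, |b j - a j| := by
  induction S using Finset.induction_on with
  | empty => simp
  | insert i S hi ih =>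
    rw [Finset.prod_insert hi, Finset.prod_insert hi, Finset.sum_insert hi]
    have h1 : ∏ j ∈ S, b j ≤ 1 := Finset.prod_le_one (fun j _ => (hb j).1) (fun j _ => (hb j).2)
    have h0 : 0 ≤ ∏ j ∈ S, b j := Finset.prod_nonneg (fun j _ => (hb j).1)
    have h2 : 0 ≤ ∑ j ∈ S, |b j - a j| := Finset.sum_nonneg fun _ _ => abs_nonneg _
    have e : b i * ∏ j ∈ S, b j - a i * ∏ j ∈ S, a j =
      (b i - a i) * ∏ j ∈ S, b j + a i * (∏ j ∈ S, b j - ∏ j ∈ S, a j) := by ring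
    rw [e]
    have k1 : (b i - a i) * ∏ j ∈ S, b j ≤ |b i - a i| := by
      have := le_abs_self (b i - a i)
      nlinarith [abs_nonneg (b i - a i)]
    have k2 : a i * (∏ j ∈ S, b j - ∏ j ∈ S, a j) ≤ ∑ j ∈ S, |b j - a j| := by
      have := (ha i).1
      have := (ha i).2
      nlinarith
    linarith

lemma localDisc_le_one {N s : ℕ} (x : Fin N → Fin s → ℝ) (t : Fin s → ℝ)
    (ht : ∀ j, t j ∈ Set.Icc (0:ℝ) 1) : |localDisc x t| ≤ 1 := by
  unfold localDisc
  have h1 : ∏ j, t j ≤ 1 := Finset.prod_le_one (fun j _ => (ht j).1) (fun j _ => (ht j).2)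
  have h0 : 0 ≤ ∏ j, t j := Finset.prod_nonneg (fun j _ => (ht j).1)
  have h2 : ((univ.filter fun n => ∀ j, x n j < t j).card : ℝ) / N ≤ 1 := by
    apply div_le_one_of_le₀ _ (Nat.cast_nonneg _)
    have := Finset.card_filter_le (univ : Finset (Fin N)) (fun n => ∀ j, x n j < t j)
    simp only [Finset.card_univ, Fintype.card_fin] at this
    exact_mod_cast this
  have h3 : 0 ≤ ((univ.filter fun n => ∀ j, x n j < t j).card : ℝ) / N := by positivity
  rw [abs_le]; constructor <;> linarith

/-- grid point -/
noncomputable def gridPt {s : ℕ} (m : ℕ) (k : Fin s → Fin (m + 1)) : Fin s → ℝ :=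
  fun j => ((k j : ℕ) : ℝ) / m

lemma gridPt_mem {s : ℕ} (m : ℕ) (k : Fin s → Fin (m + 1)) (j : Fin s) :
    gridPt m k j ∈ Set.Icc (0:ℝ) 1 := by
  refine ⟨by unfold gridPt; positivity, ?_⟩
  apply div_le_one_of_le₀ _ (Nat.cast_nonneg _)
  exact_mod_cast Nat.lt_succ_iff.1 (k j).2

lemma localDisc_grid {N s m : ℕ} (hm : 0 < m) (x : Fin N → Fin s → ℝ) (ε : ℝ)
    (hε : ∀ k : Fin s → Fin (m + 1), |localDisc x (gridPt m k)| ≤ ε)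
    (t : Fin s → ℝ) (ht : ∀ j, t j ∈ Set.Icc (0:ℝ) 1) :
    |localDisc x t| ≤ ε + s / m := by
  have hm' : (0:ℝ) < m := by exact_mod_cast hm
  let lo : Fin s → Fin (m + 1) := fun j => ⟨⌊m * t j⌋₊, by
    apply Nat.lt_succ_of_le
    apply Nat.floor_le_of_le
    have := (ht j).2
    nlinarith⟩
  let hi : Fin s → Fin (m + 1) := fun j => ⟨⌈m * t j⌉₊, by
    apply Nat.lt_succ_of_le
    apply Nat.ceil_le.2
    have := (ht j).2
    nlinarith⟩
  have hlo : ∀ j, gridPt m lo j ≤ t j := fun j => by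
    simp only [gridPt, lo]
    rw [div_le_iff₀ hm']; rw [mul_comm (m:ℝ)]
    exact Nat.floor_le (mul_nonneg (ht j).1 hm'.le)
  have hhi : ∀ j, t j ≤ gridPt m hi j := fun j => by
    simp only [gridPt, hi]
    rw [le_div_iff₀ hm', mul_comm]
    exact Nat.le_ceil _
  have hlo' : ∀ j, t j - gridPt m lo j ≤ 1 / m := fun j => by
    simp only [gridPt, lo]
    have := Nat.lt_floor_add_one (m * t j)
    rw [sub_le_iff_le_add, ← add_div, le_div_iff₀ hm', mul_comm]
    linarith
  have hhi' : ∀ j, gridPt m hi j - t j ≤ 1 / m := fun j => by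
    simp only [gridPt, hi]
    have := Nat.ceil_lt_add_one (mul_nonneg hm'.le (ht j).1)
    rw [sub_le_iff_le_add, div_le_iff₀ hm', add_mul, one_div, inv_mul_cancel₀ hm'.ne', mul_comm (t j)]
    linarith
  have cmono : ∀ a b : Fin s → ℝ, (∀ j, a j ≤ b j) →
      ((univ.filter fun n => ∀ j, x n j < a j).card : ℝ) / N ≤
      ((univ.filter fun n => ∀ j, x n j < b j).card : ℝ) / N := by
    intro a b hab
    gcongr with n hn j
    exact hab j
  have c1 := cmono _ _ hlo
  have c2 := cmono _ _ hhi
  have p1 := prod_diff_le (gridPt m lo) t (gridPt_mem m lo) ht univ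
  have p2 := prod_diff_le t (gridPt m hi) ht (gridPt_mem m hi) univ
  have q1 : ∑ j, |t j - gridPt m lo j| ≤ s / m := by
    calc _ ≤ ∑ j : Fin s, (1:ℝ) / m := by
          apply Finset.sum_le_sum
          intro j _
          rw [abs_of_nonneg (by linarith [hlo j])]
          exact hlo' j
      _ = _ := by simp [div_eq_mul_inv]
  have q2 : ∑ j, |gridPt m hi j - t j| ≤ s / m := by
    calc _ ≤ ∑ j : Fin s, (1:ℝ) / m := by
          apply Finset.sum_le_sum
          intro j _
          rw [abs_of_nonneg (by linarith [hhi j])]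
          exact hhi' j
      _ = _ := by simp [div_eq_mul_inv]
  have e1 := (abs_le.1 (hε lo)).1
  have e2 := (abs_le.1 (hε hi)).2
  unfold localDisc at *
  rw [abs_le]
  constructor <;> linarith

noncomputable def mu : Measure (ℕ → I) := Measure.infinitePi (fun _ => (volume : Measure I))

instance : IsProbabilityMeasure mu := by unfold mu; infer_instance

def boxEv {s : ℕ} (t : Fin s → ℝ) (n : ℕ) : Set (ℕ → I) :=
  {ω | ∀ j : Fin s, (ω (n * s + j.1 + 1) : ℝ) < t j}

lemma blk_inj (s : ℕ) : Function.Injective (fun p : ℕ × Fin s => p.1 * s + p.2.1 + 1) := by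
  rintro ⟨n, j⟩ ⟨n', j'⟩ h
  simp only at h
  have hs : 0 < s := lt_of_le_of_lt (Nat.zero_le _) j.2
  have h' : j.1 + s * n = j'.1 + s * n' := by rw [mul_comm s n, mul_comm s n']; omega
  have a := congrArg (· / s) h'
  have b := congrArg (· % s) h'
  simp only [Nat.add_mul_div_left _ _ hs, Nat.div_eq_of_lt j.2, Nat.div_eq_of_lt j'.2,
    Nat.add_mul_mod_self_left, Nat.mod_eq_of_lt j.2, Nat.mod_eq_of_lt j'.2, zero_add] at a b
  ext <;> simp [a, b]

lemma boxEv_meas {s : ℕ} (t : Fin s → ℝ) (n : ℕ) : MeasurableSet (boxEv t n) := by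
  unfold boxEv
  simp only [Set.ofPred_forall]
  apply MeasurableSet.iInter
  intro j
  apply measurableSet_lt _ measurable_const
  fun_prop

lemma mu_inter {s : ℕ} (t : Fin s → ℝ) (ht : ∀ j, t j ∈ Set.Icc (0:ℝ) 1) (S : Finset ℕ) :
    mu (⋂ n ∈ S, boxEv t n) = ∏ n ∈ S, ENNReal.ofReal (∏ j, t j) := by
  have e : (⋂ n ∈ S, boxEv t n) =
      (((S ×ˢ (univ : Finset (Fin s))).map ⟨_, blk_inj s⟩ : Finset ℕ) : Set ℕ).pi
        (fun k => {x : I | ∀ j : Fin s, (k - 1) % s = j.1 → (x : ℝ) < t j}) := by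
    ext ω
    simp only [boxEv, Set.mem_iInter, Set.mem_ofPred_eq, Set.mem_pi]
    constructor
    · intro h k hk j hj
      simp only [Finset.coe_map, Set.mem_image, Finset.mem_coe, Finset.mem_product] at hk
      obtain ⟨⟨n, i⟩, ⟨hn, -⟩, rfl⟩ := hk
      simp only [Function.Embedding.coeFn_mk, Nat.add_sub_cancel, Nat.mul_add_mod_self_right, Nat.mod_eq_of_lt i.2] at hj ⊢
      have : i = j := Fin.ext hj
      subst this
      exact h n hn i
    · intro h n hn j
      apply h
      · simp only [Finset.coe_map, Set.mem_image, Finset.mem_coe, Finset.mem_product]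
        exact ⟨(n, j), ⟨hn, Finset.mem_univ _⟩, rfl⟩
      · simp [Nat.mod_eq_of_lt j.2]
  rw [e, mu, Measure.infinitePi_pi, Finset.prod_map, Finset.prod_product]
  · apply Finset.prod_congr rfl
    intro _n _
    rw [ENNReal.ofReal_prod_of_nonneg (fun j _ => (ht j).1)]
    apply Finset.prod_congr rfl
    intro i _
    have : {x : I | ∀ j : Fin s, ((⟨_, blk_inj s⟩ : (ℕ × Fin s) ↪ ℕ) (_n, i) - 1) % s = j.1 → (x : ℝ) < t j}
        = Set.Iio (⟨t i, ht i⟩ : I) := by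
      ext x
      simp only [Function.Embedding.coeFn_mk, Nat.add_sub_cancel, Nat.mul_add_mod_self_right,
        Nat.mod_eq_of_lt i.2, Set.mem_ofPred_eq, Set.mem_Iio, ← Subtype.coe_lt_coe]
      constructor
      · intro h; exact h i rfl
      · intro h j hj
        have : i = j := Fin.ext hj
        subst this
        exact h
    rw [this, unitInterval.volume_Iio]
  · intro k _
    simp only [Set.ofPred_forall]
    refine MeasurableSet.iInter fun j => MeasurableSet.iInter fun _ => ?_
    exact measurableSet_lt measurable_subtype_coe measurable_const

lemma tail {s N : ℕ} (hN : 0 < N) (t : Fin s → ℝ) (ht : ∀ j, t j ∈ Set.Icc (0:ℝ) 1) (ε : ℝ) (hε : 0 ≤ ε) :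
    mu.real {ω | ε < |localDisc (fun (n : Fin N) (j : Fin s) => (ω (n.1 * s + j.1 + 1) : ℝ)) t|}
      ≤ 2 * Real.exp (-2 * N * ε ^ 2) := by
  set p := ∏ j, t j with hp
  have p0 : 0 ≤ p := Finset.prod_nonneg (fun j _ => (ht j).1)
  have hN' : (0:ℝ) < N := by exact_mod_cast hN
  have hA : ∀ n, mu (boxEv t n) = ENNReal.ofReal p := fun n => by
    simpa using mu_inter t ht {n}
  have hind : iIndepSet (boxEv t) mu := by
    rw [iIndepSet_iff_meas_biInter (boxEv_meas t)]
    intro S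
    rw [mu_inter t ht S]
    simp [hA, hp]
  have hfun : iIndepFun (fun n => (boxEv t n).indicator fun _ => (1 : ℝ)) mu :=
    hind.iIndepFun_indicator
  have hY : ∀ n, Measurable ((boxEv t n).indicator (fun _ => (1:ℝ))) :=
    fun n => measurable_const.indicator (boxEv_meas t n)
  have hsub : ∀ n, HasSubgaussianMGF (fun ω => (boxEv t n).indicator (fun _ => (1:ℝ)) ω - p) (1/4) mu := by
    intro n
    have h := hasSubgaussianMGF_of_mem_Icc (μ := mu) (a := 0) (b := 1) (hY n).aemeasurable
      (Filter.Eventually.of_forall fun ω => by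
        by_cases h : ω ∈ boxEv t n <;> simp [h])
    rw [integral_indicator_const _ (boxEv_meas t n), measureReal_def, hA,
      ENNReal.toReal_ofReal p0] at h
    convert h using 1
    · simp
    · simp; norm_num
  have i1 : iIndepFun (fun n ω => (boxEv t n).indicator (fun _ => (1:ℝ)) ω - p) mu :=
    hfun.comp (fun _ y => y - p) (fun _ => by fun_prop)
  have i2 : iIndepFun (fun n => -(fun ω => (boxEv t n).indicator (fun _ => (1:ℝ)) ω - p)) mu :=
    hfun.comp (fun _ y => -(y - p)) (fun _ => by fun_prop)
  have t1 := HasSubgaussianMGF.measure_sum_range_ge_le_of_iIndepFun i1 (n := N) (c := 1/4)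
    (fun i _ => hsub i) (ε := N * ε) (by positivity)
  have t2 := HasSubgaussianMGF.measure_sum_range_ge_le_of_iIndepFun i2 (n := N) (c := 1/4)
    (fun i _ => (hsub i).neg) (ε := N * ε) (by positivity)
  have ee : -(N * ε) ^ 2 / (2 * N * ((1/4 : NNReal) : ℝ)) = -2 * N * ε ^ 2 := by
    push_cast; field_simp; ring
  rw [ee] at t1 t2
  have hcount : ∀ ω : ℕ → I, ∑ i ∈ Finset.range N, (boxEv t i).indicator (fun _ => (1:ℝ)) ω =
      ((univ.filter fun n : Fin N => ∀ j : Fin s, (ω (n.1 * s + j.1 + 1) : ℝ) < t j).card : ℝ) := by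
    intro ω
    rw [Finset.sum_range, Finset.card_filter]
    push_cast
    apply Finset.sum_congr rfl
    intro n _
    simp only [Set.indicator_apply, boxEv, Set.mem_ofPred_eq]
  calc _ ≤ mu.real ({ω | N * ε ≤ ∑ i ∈ Finset.range N, ((boxEv t i).indicator (fun _ => (1:ℝ)) ω - p)} ∪
        {ω | N * ε ≤ ∑ i ∈ Finset.range N, (-(fun ω => (boxEv t i).indicator (fun _ => (1:ℝ)) ω - p)) ω}) := by
        apply measureReal_mono _ (measure_ne_top _ _)
        intro ω hω
        simp only [Set.mem_ofPred_eq, Set.mem_union, Pi.neg_apply, Finset.sum_neg_distrib,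
          Finset.sum_sub_distrib, hcount, Finset.sum_const, Finset.card_range, nsmul_eq_mul] at hω ⊢
        unfold localDisc at hω
        rw [← hp, lt_abs] at hω
        rcases hω with hω | hω
        · left
          rw [lt_sub_iff_add_lt, lt_div_iff₀ hN'] at hω
          linarith
        · right
          rw [neg_sub, lt_sub_iff_add_lt, ← lt_sub_iff_add_lt', div_lt_iff₀ hN'] at hω
          linarith
    _ ≤ _ := measureReal_union_le _ _
    _ ≤ _ := by linarith

noncomputable def rr (s N : ℕ) : ℝ := Real.sqrt ((s : ℝ) * Real.log N) / Real.sqrt N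

lemma rr_nonneg (s N : ℕ) : 0 ≤ rr s N := by unfold rr; positivity

lemma rr_sq (s N : ℕ) (hN : 2 ≤ N) : N * rr s N ^ 2 = s * Real.log N := by
  have hN' : (0:ℝ) < N := by exact_mod_cast (by omega : 0 < N)
  have : 0 ≤ Real.log N := Real.log_natCast_nonneg N
  unfold rr
  rw [div_pow, Real.sq_sqrt (by positivity), Real.sq_sqrt hN'.le]
  field_simp

lemma quarter_le_log (N : ℕ) (hN : 2 ≤ N) : 1 / 4 ≤ Real.log N := by
  have h2 := Real.log_two_gt_d9
  have : Real.log 2 ≤ Real.log N := Real.log_le_log (by norm_num) (by exact_mod_cast hN)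
  linarith

def badEv (s N : ℕ) : Set (ℕ → I) :=
  ⋃ g : Fin s → Fin (N ^ 2 + 1), {ω | 3 * rr s N <
    |localDisc (fun (n : Fin N) (j : Fin s) => (ω (n.1 * s + j.1 + 1) : ℝ)) (gridPt (N ^ 2) g)|}

lemma badEv_le (n k : ℕ) :
    mu.real (badEv (k + 1) (n + 2)) ≤ 1 / 8 * (1 / ((n + 2 : ℕ) : ℝ) ^ 2 * (1 / 2) ^ k) := by
  set N := n + 2 with hNd
  set s := k + 1 with hsd
  have hN : 2 ≤ N := by omega
  have hN2 : (2:ℝ) ≤ N := by exact_mod_cast hN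
  have hN' : (0:ℝ) < N := by linarith
  have h1 : mu.real (badEv s N) ≤ ∑ _g : Fin s → Fin (N ^ 2 + 1), 2 * Real.exp (-2 * N * (3 * rr s N) ^ 2) := by
    unfold badEv
    refine (measureReal_iUnion_fintype_le _).trans ?_
    apply Finset.sum_le_sum
    intro g _
    exact tail (by omega) _ (gridPt_mem _ g) _ (by have := rr_nonneg s N; positivity)
  have h2 : Real.exp (-2 * N * (3 * rr s N) ^ 2) = 1 / (N:ℝ) ^ (18 * s) := by
    have : -2 * N * (3 * rr s N) ^ 2 = -(((18 * s : ℕ) : ℝ) * Real.log N) := by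
      push_cast
      linear_combination (-18 : ℝ) * rr_sq s N hN
    rw [this, Real.exp_neg, Real.exp_nat_mul, Real.exp_log hN', one_div]
  rw [h2] at h1
  simp only [Finset.sum_const, Finset.card_univ, Fintype.card_fun, Fintype.card_fin,
    nsmul_eq_mul, Nat.cast_pow, Nat.cast_add, Nat.cast_one] at h1
  refine h1.trans ?_
  have h3 : ((N:ℝ) ^ 2 + 1) ^ s ≤ (N:ℝ) ^ (3 * s) := by
    rw [pow_mul]
    apply pow_le_pow_left₀ (by positivity)
    nlinarith [sq_nonneg ((N:ℝ))]
  have h4 : (16:ℝ) * N ^ 2 * 2 ^ k ≤ (N:ℝ) ^ (15 * s) := by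
    have e : (N:ℝ) ^ (15 * s) = N ^ 13 * N ^ 2 * N ^ (15 * k) := by
      rw [← pow_add, ← pow_add]; congr 1; omega
    rw [e]
    have a : (16:ℝ) ≤ N ^ 13 := by
      calc (16:ℝ) ≤ 2 ^ 13 := by norm_num
        _ ≤ _ := by gcongr
    have b : (2:ℝ) ^ k ≤ N ^ (15 * k) := by
      calc (2:ℝ) ^ k ≤ N ^ k := by gcongr
        _ ≤ _ := by apply pow_le_pow_right₀ (by linarith); omega
    gcongr
  calc ((N:ℝ) ^ 2 + 1) ^ s * (2 * (1 / (N:ℝ) ^ (18 * s)))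
      ≤ (N:ℝ) ^ (3 * s) * (2 * (1 / (N:ℝ) ^ (18 * s))) := by gcongr
    _ = 2 / (N:ℝ) ^ (15 * s) := by
        have : (N:ℝ) ^ (18 * s) = N ^ (3 * s) * N ^ (15 * s) := by
          rw [← pow_add]; congr 1; ring
        rw [this]; field_simp
    _ ≤ 2 / ((16:ℝ) * N ^ 2 * 2 ^ k) := by gcongr
    _ = _ := by rw [div_pow, one_pow]; field_simp; norm_num

lemma exists_good : ∃ ω : ℕ → I, ∀ s N : ℕ, 1 ≤ s → 2 ≤ N → ω ∉ badEv s N := by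
  have hz : HasSum (fun n : ℕ => 1 / ((n + 2 : ℕ) : ℝ) ^ 2) (Real.pi ^ 2 / 6 - 1) := by
    have := (hasSum_nat_add_iff' 2).2 hasSum_zeta_two
    simpa [Finset.sum_range_succ] using this
  have hg : HasSum (fun k : ℕ => ((1:ℝ) / 2) ^ k) 2 := hasSum_geometric_two
  have hprod := (hz.mul hg (hz.summable.mul_of_nonneg hg.summable
    (fun n => by positivity) (fun n => by positivity))).mul_left (1 / 8)
  have hlt : mu (⋃ p : ℕ × ℕ, badEv (p.2 + 1) (p.1 + 2)) < 1 := by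
    calc _ ≤ ∑' p : ℕ × ℕ, mu (badEv (p.2 + 1) (p.1 + 2)) := measure_iUnion_le _
      _ ≤ ∑' p : ℕ × ℕ, ENNReal.ofReal (1 / 8 * (1 / ((p.1 + 2 : ℕ) : ℝ) ^ 2 * (1 / 2) ^ p.2)) := by
          apply ENNReal.tsum_le_tsum
          intro p
          rw [← ofReal_measureReal]
          exact ENNReal.ofReal_le_ofReal (badEv_le p.1 p.2)
      _ = ENNReal.ofReal (1 / 8 * ((Real.pi ^ 2 / 6 - 1) * 2)) := by
          rw [← ENNReal.ofReal_tsum_of_nonneg _ hprod.summable, hprod.tsum_eq]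
          intro p; positivity
      _ < 1 := by
          rw [ENNReal.ofReal_lt_one]
          nlinarith [Real.pi_lt_d2, Real.pi_pos]
  by_contra! h
  have : (⋃ p : ℕ × ℕ, badEv (p.2 + 1) (p.1 + 2)) = Set.univ := by
    rw [Set.eq_univ_iff_forall]
    intro ω
    obtain ⟨s, N, hs, hN, hb⟩ := h ω
    rw [Set.mem_iUnion]
    refine ⟨(N - 2, s - 1), ?_⟩
    simp only
    rwa [Nat.sub_add_cancel hs, Nat.sub_add_cancel hN]
  rw [this, measure_univ] at hlt
  exact lt_irrefl _ hlt

/-- there is a constant `C > 0` and a sequence `(u_n)_{n≥1}` in `[0,1]`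
such that for all `s ≥ 1` and `N ≥ 2` the point set of the `N` consecutive
non-overlapping blocks `u^{(s)}_n = (u_{(n−1)s+1}, …, u_{ns})`, `n = 1, …, N`, has
star-discrepancy at most `C √(s log N)/√N`.  (The point with index `n : Fin N`
corresponds to the block `u^{(s)}_{n+1}`, whose `j`-th coordinate, `j : Fin s`, is
`u (n s + j + 1)`.) -/
theorem exists_cud_sequence :
    ∃ C : ℝ, 0 < C ∧ ∃ u : ℕ → ℝ, (∀ n, u n ∈ Set.Icc (0:ℝ) 1) ∧
      ∀ s N : ℕ, 1 ≤ s → 2 ≤ N →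
        starDisc (fun (n : Fin N) (j : Fin s) => u (n.1 * s + j.1 + 1)) ≤
          C * Real.sqrt ((s : ℝ) * Real.log N) / Real.sqrt N := by
  obtain ⟨ω, hω⟩ := exists_good
  refine ⟨5, by norm_num, fun n => (ω n : ℝ), fun n => (ω n).2, ?_⟩
  intro s N hs hN
  rw [mul_div_assoc]
  change _ ≤ 5 * rr s N
  have hr := rr_nonneg s N
  have hsq := rr_sq s N hN
  have hlog := quarter_le_log N hN
  have hN2 : (2:ℝ) ≤ N := by exact_mod_cast hN
  have hs1 : (1:ℝ) ≤ s := by exact_mod_cast hs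
  apply Real.sSup_le _ (by positivity)
  rintro d ⟨t, ht, rfl⟩
  rcases le_total s N with hsN | hsN
  · have hsN' : (s:ℝ) ≤ N := by exact_mod_cast hsN
    have hgrid : ∀ g : Fin s → Fin (N ^ 2 + 1), |localDisc (fun (n : Fin N) (j : Fin s) =>
        (ω (n.1 * s + j.1 + 1) : ℝ)) (gridPt (N ^ 2) g)| ≤ 3 * rr s N := by
      intro g
      by_contra! hlt
      exact hω s N hs hN (Set.mem_iUnion.2 ⟨g, hlt⟩)
    have h := localDisc_grid (by positivity) _ _ hgrid t ht
    have h2 : (s:ℝ) / (N ^ 2 : ℕ) ≤ 2 * rr s N := by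
      have a : (s:ℝ) / (N ^ 2 : ℕ) ≤ 1 / N := by
        push_cast
        rw [div_le_div_iff₀ (by positivity) (by positivity)]
        nlinarith
      refine a.trans ?_
      refine (sq_le_sq₀ (by positivity) (by positivity)).1 ?_
      have b : (1:ℝ) / 4 ≤ N * rr s N ^ 2 := by rw [hsq]; nlinarith
      have c : (1 / (N:ℝ)) ^ 2 ≤ 1 / N := by
        rw [div_pow, one_pow]
        apply one_div_le_one_div_of_le (by positivity)
        nlinarith
      refine c.trans ?_
      rw [div_le_iff₀ (by positivity)]
      nlinarith
    linarith
  · have hsN' : (N:ℝ) ≤ s := by exact_mod_cast hsN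
    refine (localDisc_le_one _ t ht).trans ?_
    have b : (N:ℝ) * (1 / 4) ≤ N * rr s N ^ 2 := by rw [hsq]; nlinarith
    have c : (1:ℝ) / 4 ≤ rr s N ^ 2 := le_of_mul_le_mul_left b (by linarith)
    nlinarith
end
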